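/- For every sentence C, the colored complete homogeneous function expands positively into the colored immaculate basis as H_C = Σ_J K_{J,C} 𝔖_J, where the sum runs over all sentences J with |J| = |C| and K_{J,C} is the number of colored immaculate tableaux of shape J and type C. -/

import Mathlib

open scoped BigOperators

namespace ColoredImm

variable {A : Type*}

/-- A *weak sentence* over the alphabet `A`: a finite list of words (words may be empty). -/
abbrev Sentence (A : Type*) := List (List A)

/-- A genuine *sentence*: all of its words are nonempty. -/
def IsSentence (I : Sentence A) : Prop := ∀ w ∈ I, w ≠ []

/-- The size `|I|` of a sentence: its total number of letters. -/
def size (I : Sentence A) : ℕ := (I.map List.length).sum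

/-- The word lengths `wℓ(I)` of a sentence. -/
def wl (I : Sentence A) : List ℕ := I.map List.length

/-- The flattening of a weak sentence: delete all empty words. -/
def flattenWS (I : Sentence A) : Sentence A := I.filter (fun w => !w.isEmpty)

/-- `Refines J I` means `J ⪯ I`: the sentence `I` can be obtained by concatenating
some adjacent words of `J` (so `J` is a refinement of `I`, and `I` a coarsening of `J`). -/
def Refines (J I : Sentence A) : Prop :=
  ∃ P : List (Sentence A), (∀ p ∈ P, p ≠ []) ∧ P.flatten = J ∧ P.map List.flatten = I

/-! ### Fillings and colored immaculate tableaux -/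

/-- An integer filling of a diagram, recorded row by row. -/
abbrev Filling := List (List ℕ)

/-- The entry of a filling at box `b = (row, column)` (0-indexed), with default `0`. -/
def entryAt (f : Filling) (b : ℕ × ℕ) : ℕ := (f.getD b.1 []).getD b.2 0

/-- `IsCIT I f`: `f` is a colored immaculate tableau of shape `I`; that is, `f` has the
same shape as the colored composition diagram of `I`, its entries are positive integers
weakly increasing left to right along each row, and the entries in the first column are
strictly increasing from top to bottom. -/
def IsCIT (I : Sentence A) (f : Filling) : Prop :=
  f.map List.length = I.map List.length ∧
  (∀ row ∈ f, row.Chain' (· ≤ ·)) ∧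
  (f.filterMap List.head?).Chain' (· < ·) ∧
  (∀ x ∈ f.flatten, 1 ≤ x)

/-- The colors (letters of `w`) of the boxes of one row whose entry (in `row`) is `v`,
read from left to right. -/
def rowWith (w : List A) (row : List ℕ) (v : ℕ) : List A :=
  ((w.zip row).filter (fun p => p.2 == v)).map Prod.fst

/-- The word of the type of a tableau at value `v`: the colors of all boxes with entry `v`,
read left to right, from the bottom row up to the top row. -/
def typeWord (I : Sentence A) (f : Filling) (v : ℕ) : List A :=
  (((I.zip f).reverse).map (fun p => rowWith p.1 p.2 v)).flatten

/-- `HasType I f B` : the tableau `f` (of shape `I`) has type the weak sentence `B`,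
i.e. for every positive integer `v`, the colors of the boxes of `f` containing `v`
(read left to right, bottom to top) form the `v`-th word of `B`. -/
def HasType (I : Sentence A) (f : Filling) (B : Sentence A) : Prop :=
  ∀ v, 1 ≤ v → typeWord I f v = B.getD (v - 1) []

/-- `K_{J,B}`: the number of colored immaculate tableaux of shape `J` and type `B`. -/
noncomputable def KJB (J B : Sentence A) : ℕ :=
  Set.ncard {f : Filling | IsCIT J f ∧ HasType J f B}

/-! ### Standardization -/

/-- The list of boxes of a filling. -/
def boxes (f : Filling) : List (ℕ × ℕ) :=
  ((List.range f.length).map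
    (fun r => (List.range (f.getD r []).length).map (fun j => (r, j)))).flatten

/-- `beforeB f b b'`: box `b` comes strictly before box `b'` in the type-reading order of `f`
(smaller entries first; among equal entries, lower rows first, and within a row left to right). -/
def beforeB (f : Filling) (b b' : ℕ × ℕ) : Bool :=
  entryAt f b < entryAt f b' ||
    (entryAt f b == entryAt f b' && (b'.1 < b.1 || (b.1 == b'.1 && b.2 < b'.2)))

/-- The standardization of a filling: each box is renumbered (starting from `1`)
according to its position in the type-reading order. -/
def stdFill (f : Filling) : Filling :=
  (List.range f.length).map (fun r =>
    (List.range (f.getD r []).length).map (fun j =>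
      1 + ((boxes f).filter (fun b' => beforeB f b' (r, j))).length))

/-- The number of boxes of a filling. -/
def nBoxes (f : Filling) : ℕ := f.flatten.length

/-- A filling of `n` boxes is standard when its entries are exactly `1, …, n`,
each appearing once. -/
def IsStandardF (f : Filling) : Prop := f.flatten.Perm (List.range' 1 (nBoxes f))

/-! ### Descents and the colored descent composition -/

/-- The (0-indexed) row containing the value `v` in a standard filling. -/
def rowOf (f : Filling) (v : ℕ) : ℕ := f.findIdx (fun row => row.contains v)

/-- The sorted list of descents of a standard filling: those `i` with `1 ≤ i ≤ n-1`
such that `i+1` lies in a strictly lower row than `i`. -/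
def descList (f : Filling) : List ℕ :=
  (List.range' 1 (nBoxes f - 1)).filter (fun i => decide (rowOf f i < rowOf f (i + 1)))

/-- The composition of `n` associated to a set of split positions `d_1 < … < d_k`:
`(d_1, d_2 - d_1, …, n - d_k)`. -/
def compOf (ds : List ℕ) (n : ℕ) : List ℕ :=
  List.zipWith (fun a b => b - a) (0 :: ds) (ds ++ [n])

/-- Split a word into a sentence according to a composition. -/
def splitByComp : List A → List ℕ → List (List A)
  | _, [] => []
  | w, a :: rest => w.take a :: splitByComp (w.drop a) rest

/-- The color of the box containing the value `v` in a standard filling of shape `I`. -/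
def colorOf [Inhabited A] (I : Sentence A) (f : Filling) (v : ℕ) : A :=
  (I.getD (rowOf f v) []).getD ((f.getD (rowOf f v) []).findIdx (fun x => x == v)) default

/-- The maximal word of the colored descent composition of a standard filling of shape `I`:
the colors of its boxes read in the order of their integer entries. -/
def readWord [Inhabited A] (I : Sentence A) (f : Filling) : List A :=
  (List.range (nBoxes f)).map (fun i => colorOf I f (i + 1))

/-- The colored descent composition `co_A(U)` of a standard colored immaculate tableau:
read the colors of the boxes in the order of their entries, starting a new word
immediately after each descent. -/
def coA [Inhabited A] (I : Sentence A) (f : Filling) : Sentence A :=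
  if nBoxes f = 0 then [] else splitByComp (readWord I f) (compOf (descList f) (nBoxes f))

/-- `L_{J,C}`: the number of standard colored immaculate tableaux of shape `J`
with colored descent composition `C`. -/
noncomputable def LJC [Inhabited A] (J C : Sentence A) : ℕ :=
  Set.ncard {f : Filling | IsCIT J f ∧ IsStandardF f ∧ coA J f = C}

/-! ### The colored quasisymmetric functions `QSym_A` -/

/-- A (normal form of a) monomial in the partially commutative variables `x_{a,i}`:
a pair consisting of the list of words `(w_1, …, w_m)` and the list of (strictly
increasing, positive) second indices `(j_1 < … < j_m)`, representing
`x_{w_1,j_1} ⋯ x_{w_m,j_m}`. -/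
abbrev Mono (A : Type*) := List (List A) × List ℕ

/-- A colored quasisymmetric "series": a formal linear combination of monomials,
recorded by its coefficient function.  `QSym_A` itself is the span of the colored
monomial functions `MQ I` inside this space. -/
abbrev QSymA (A : Type*) := Mono A → ℚ

/-- Validity of a monomial normal form: words and indices match up, the indices are
strictly increasing positive integers, and all words are nonempty. -/
def ValidMono (m : Mono A) : Prop :=
  m.1.length = m.2.length ∧ m.2.Chain' (· < ·) ∧ (∀ j ∈ m.2, 1 ≤ j) ∧ ∀ w ∈ m.1, w ≠ []

open Classical in
/-- The colored monomial quasisymmetric function `M_I`: the sum of all monomials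
`x_{w_1,j_1} ⋯ x_{w_m,j_m}` with `j_1 < … < j_m`, where `I = (w_1, …, w_m)`. -/
noncomputable def MQ (I : Sentence A) : QSymA A := fun m =>
  if m.1 = I ∧ ValidMono m then 1 else 0

/-- The largest entry of a filling. -/
def maxEntry (f : Filling) : ℕ := f.flatten.foldr max 0

/-- The monomial `x_T` of a colored immaculate tableau `T = f` of shape `I`:
for `T` of type `B = (u_1, …, u_j)` it is `x_{u_1,1} x_{u_2,2} ⋯ x_{u_j,j}`
(empty words are skipped). -/
def monoOf (I : Sentence A) (f : Filling) : Mono A :=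
  let vs := ((List.range (maxEntry f)).map (· + 1)).filter (fun v => !(typeWord I f v).isEmpty)
  (vs.map (typeWord I f), vs)

/-- The colored dual immaculate function `𝔖*_J = Σ_T x_T`, the sum of the monomials of all
colored immaculate tableaux `T` of shape `J` (its coefficient at a monomial `m` is the
number of such tableaux with `x_T = m`). -/
noncomputable def dualImm (J : Sentence A) : QSymA A := fun m =>
  (Set.ncard {f : Filling | IsCIT J f ∧ monoOf J f = m} : ℚ)

/-- The colored fundamental quasisymmetric function `F_I = Σ_{J ⪯ I} M_J`. -/
noncomputable def FQ (I : Sentence A) : QSymA A :=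
  ∑ᶠ J ∈ {J : Sentence A | Refines J I}, MQ J

/-! ### The colored immaculate descent graph -/

/-- Edges of the colored immaculate descent graph: a directed edge from `I` to `J` (`J ≠ I`)
whenever some standard colored immaculate tableau of shape `I` has colored descent
composition `J`. -/
def IsEdge [Inhabited A] (I J : Sentence A) : Prop := J ≠ I ∧ LJC I J ≠ 0

/-- Directed paths from `I` to `K` in the colored immaculate descent graph, recorded by
their (nonempty) lists of successive vertices; the path `[I]` is the empty path at `I`. -/
def PathsFromTo [Inhabited A] (I K : Sentence A) : Set (List (Sentence A)) :=
  {p | p.head? = some I ∧ p.getLast? = some K ∧ p.Chain' IsEdge}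

/-- The signed weight `(-1)^{ℓ(𝒫)} prod(𝒫)` of a directed path `𝒫`:
`ℓ(𝒫)` is its number of edges and `prod(𝒫)` the product of its edge weights `L_{I,J}`. -/
noncomputable def pathWeight [Inhabited A] (p : List (Sentence A)) : ℚ :=
  ((-1 : ℚ)) ^ (p.length - 1) * ((p.zip p.tail).map (fun e => (LJC e.1 e.2 : ℚ))).prod

/-- `L⁻¹_{I,K} = Σ_𝒫 (-1)^{ℓ(𝒫)} prod(𝒫)`, summed over all directed paths `𝒫`
from `I` to `K` in the colored immaculate descent graph. -/
noncomputable def Linv [Inhabited A] (I K : Sentence A) : ℚ :=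
  ∑ᶠ p ∈ PathsFromTo I K, pathWeight p

/-! ### The colored noncommutative symmetric functions `NSym_A` -/

/-- A formal series over the complete homogeneous basis `{H_I}` of `NSym_A`, recorded by its
coefficient function on (weak) sentences.  `NSym_A` itself consists of the finitely
supported elements supported on genuine sentences; see `InNSym`. -/
abbrev NSymA (A : Type*) := Sentence A → ℚ

/-- Membership in `NSym_A` proper: finitely supported, and supported on genuine sentences. -/
def InNSym (f : NSymA A) : Prop :=
  (Function.support f).Finite ∧ ∀ I, f I ≠ 0 → IsSentence I

open Classical in
/-- The colored complete homogeneous noncommutative symmetric function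
`H_I = H_{w_1} ⋯ H_{w_k}`. -/
noncomputable def Hd (I : Sentence A) : NSymA A := fun J => if J = I then 1 else 0

/-- `H_w` for a single word `w`, with `H_∅ = 1`. -/
noncomputable def Hw (w : List A) : NSymA A := if w.isEmpty then Hd [] else Hd [w]

/-- Multiplication in `NSym_A` (the concatenation product, extended to series):
`H_I · H_J = H_{I ⬝ J}`. -/
def mulN (f g : NSymA A) : NSymA A := fun I =>
  ∑ j ∈ Finset.range (I.length + 1), f (I.take j) * g (I.drop j)

/-- The duality pairing `⟨·,·⟩ : NSym_A × QSym_A → ℚ`, determined by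
`⟨H_I, M_J⟩ = δ_{I,J}`: the `M_I`-coefficient of a quasisymmetric function is its
coefficient on the monomial `x_{w_1,1} x_{w_2,2} ⋯ x_{w_k,k}`. -/
noncomputable def pairNQ (G : NSymA A) (F : QSymA A) : ℚ :=
  ∑ᶠ I ∈ {I : Sentence A | IsSentence I}, G I * F (I, List.range' 1 I.length)

/-- All ways of splitting each word of a list of words into a prefix and a suffix. -/
def splitsOf : List (List A) → List (List (List A) × List (List A))
  | [] => [([], [])]
  | w :: ws =>
      (((splitsOf ws).map (fun p =>
        (List.range (w.length + 1)).map (fun t => (w.take t :: p.1, w.drop t :: p.2))))).flatten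

/-- Restriction of a candidate monomial: keep only the nonempty words together with
their indices. -/
def restrictMono (ws : List (List A)) (js : List ℕ) : Mono A :=
  let ps := (ws.zip js).filter (fun p => !p.1.isEmpty)
  (ps.map Prod.fst, ps.map Prod.snd)

/-- The product of colored quasisymmetric series: the coefficient of a monomial in `F·G`
is the sum, over all ways of writing each of its words as a concatenation of a word of a
monomial of `F` (on the left) and a word of a monomial of `G` (on the right), of the
products of the corresponding coefficients. -/
def mulQ (F G : QSymA A) : QSymA A := fun m =>
  ((splitsOf m.1).map (fun p => F (restrictMono p.1 m.2) * G (restrictMono p.2 m.2))).sum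

/-- The right perp operator `M^⊸` of `M ∈ QSym_A`, the linear operator on `NSym_A`
determined by `⟨M^⊸(H), G⟩ = ⟨H, G·M⟩`; explicitly, for the dual bases `{M_I}` and `{H_I}`,
`M^⊸(H) = Σ_I ⟨H, M_I · M⟩ H_I`. -/
noncomputable def rperp (M : QSymA A) (H : NSymA A) : NSymA A :=
  ∑ᶠ I ∈ {I : Sentence A | IsSentence I}, pairNQ H (mulQ (MQ I) M) • Hd I

/-- The colored noncommutative Bernstein operator
`𝔹_v = Σ_u Σ_{Q : w(Q^r) = u} (-1)^{ℓ(Q)} H_{v·u} · (Σ_{S ⪰ Q} M_S^⊸)`,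
where `Q` runs over all sentences, `u = w(Q^r)` is the concatenation of the words of `Q`
in reverse order, and `S` runs over all coarsenings of `Q`. -/
noncomputable def Bern (v : List A) (f : NSymA A) : NSymA A :=
  ∑ᶠ Q ∈ {Q : Sentence A | IsSentence Q},
    ((-1 : ℚ)) ^ Q.length •
      mulN (Hw (v ++ Q.reverse.flatten))
        (∑ᶠ S ∈ {S : Sentence A | Refines Q S}, rperp (MQ S) f)

/-- The colored immaculate function `𝔖_J = 𝔹_{v_1} 𝔹_{v_2} ⋯ 𝔹_{v_h}(1)`. -/
noncomputable def ImmS (J : Sentence A) : NSymA A := J.foldr Bern (Hd [])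

/-- The colored ribbon function `R_I = Σ_{J ⪰ I} (-1)^{ℓ(J) - ℓ(I)} H_J`. -/
noncomputable def Rib (I : Sentence A) : NSymA A :=
  ∑ᶠ J ∈ {J : Sentence A | Refines I J}, ((-1 : ℚ)) ^ (I.length - J.length) • Hd J

/-- The Pieri relation `J ⊂_w K` for a sentence `J = (v_1, …, v_h)` and a word `w`:
`K = (u_1, …, u_g)` with `h ≤ g ≤ h+1` (setting `v_{h+1} = ∅`) and `u_j = v_j · q_j`
for words `q_j` (possibly empty) whose reversed concatenation `q_g ⋯ q_1` equals `w`. -/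
def PieriRel (J : Sentence A) (w : List A) (K : Sentence A) : Prop :=
  J.length ≤ K.length ∧ K.length ≤ J.length + 1 ∧
  ∃ q : List (List A), q.length = K.length ∧ q.reverse.flatten = w ∧
    ∀ j < K.length, K.getD j [] = J.getD j [] ++ q.getD j []

/-- Right containment of a weak sentence `K` in `J`: same length, and each word of `K` is a
suffix of the corresponding word of `J`. -/
def RightContained (K J : Sentence A) : Prop :=
  K.length = J.length ∧ ∀ i < J.length, (K.getD i []).IsSuffix (J.getD i [])

/-- The weak sentence `J/_R K`: remove each word of `K` from the right end of the
corresponding word of `J`. -/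
def rightQuot (J K : Sentence A) : Sentence A :=
  List.zipWith (fun v u => v.take (v.length - u.length)) J K

/-- Left containment `J ⊆_L I`: `ℓ(J) ≤ ℓ(I)` and each word of `J` is a prefix of the
corresponding word of `I`. -/
def LeftContained (J I : Sentence A) : Prop :=
  J.length ≤ I.length ∧ ∀ i < J.length, (J.getD i []).IsPrefix (I.getD i [])

/-- A skew colored immaculate tableau of shape `I/J`: a filling of the active boxes
(the `i`-th row keeps the last `|w_i| - |v_i|` boxes) with positive integers, rows weakly
increasing left to right, and the entries in the (active part of the) first column of `I`
strictly increasing top to bottom. -/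
def IsSkewCIT (I J : Sentence A) (f : Filling) : Prop :=
  f.map List.length =
    (List.range I.length).map (fun i => (I.getD i []).length - (J.getD i []).length) ∧
  (∀ row ∈ f, row.Chain' (· ≤ ·)) ∧
  ((List.range I.length).filterMap
    (fun i => if (J.getD i []).length = 0 then (f.getD i []).head? else none)).Chain' (· < ·) ∧
  (∀ x ∈ f.flatten, 1 ≤ x)

/-- The word of the type of a skew tableau at value `v`: the colors of the active boxes with
entry `v`, read left to right, bottom to top. -/
def skewTypeWord (I J : Sentence A) (f : Filling) (v : ℕ) : List A :=
  (((List.range I.length).reverse).map (fun i =>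
    rowWith ((I.getD i []).drop (J.getD i []).length) (f.getD i []) v)).flatten

/-- `SkewHasType I J f K` : the skew tableau `f` of shape `I/J` has type `K`. -/
def SkewHasType (I J : Sentence A) (f : Filling) (K : Sentence A) : Prop :=
  ∀ v, 1 ≤ v → skewTypeWord I J f v = K.getD (v - 1) []

/-! ### The complement involution `ψ` and the row-strict functions -/

/-- The complement `I^c` of a sentence: the unique sentence with the same maximal word
that splits exactly where `I` does not. -/
def complSent (I : Sentence A) : Sentence A :=
  let w := I.flatten
  let n := w.length
  if n = 0 then []
  else
    let splits := (((wl I).scanl (· + ·) 0).drop 1).dropLast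
    let csplits := (List.range' 1 (n - 1)).filter (fun i => !(splits.contains i))
    splitByComp w (compOf csplits n)

/-- The `M_I`-coefficient of a colored quasisymmetric function. -/
noncomputable def coeffM (G : QSymA A) (I : Sentence A) : ℚ := G (I, List.range' 1 I.length)

/-- The image of `M_I` under `ψ`, via `M_I = Σ_{J ⪯ I} (-1)^{ℓ(J)-ℓ(I)} F_J` and
`ψ(F_J) = F_{J^c}`. -/
noncomputable def psiM (I : Sentence A) : QSymA A :=
  ∑ᶠ J ∈ {J : Sentence A | Refines J I}, ((-1 : ℚ)) ^ (J.length - I.length) • FQ (complSent J)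

/-- The linear involution `ψ` of `QSym_A`, determined by `ψ(F_I) = F_{I^c}`. -/
noncomputable def psiQ (G : QSymA A) : QSymA A :=
  ∑ᶠ I ∈ {I : Sentence A | IsSentence I}, coeffM G I • psiM I

/-- A colored row-strict immaculate tableau of shape `I`: entries strictly increase left to
right along each row and weakly increase top to bottom down the first column. -/
def IsCRSIT (I : Sentence A) (f : Filling) : Prop :=
  f.map List.length = I.map List.length ∧
  (∀ row ∈ f, row.Chain' (· < ·)) ∧
  (f.filterMap List.head?).Chain' (· ≤ ·) ∧
  (∀ x ∈ f.flatten, 1 ≤ x)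

/-- The word of the type of a row-strict tableau at value `v`: the colors of the boxes with
entry `v`, read left to right, top to bottom. -/
def rsTypeWord (I : Sentence A) (f : Filling) (v : ℕ) : List A :=
  ((I.zip f).map (fun p => rowWith p.1 p.2 v)).flatten

/-- The monomial `x_T` of a colored row-strict immaculate tableau. -/
def rsMonoOf (I : Sentence A) (f : Filling) : Mono A :=
  let vs := ((List.range (maxEntry f)).map (· + 1)).filter (fun v => !(rsTypeWord I f v).isEmpty)
  (vs.map (rsTypeWord I f), vs)

/-- The colored row-strict dual immaculate function `ℛ𝔖*_J = Σ_T x_T`, summed over all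
colored row-strict immaculate tableaux `T` of shape `J`. -/
noncomputable def rsDualImm (J : Sentence A) : QSymA A := fun m =>
  (Set.ncard {f : Filling | IsCRSIT J f ∧ rsMonoOf J f = m} : ℚ)

/-- `α ⪰ β` in the reverse lexicographic order on compositions: at the first index where
they differ, `α` has the *smaller* entry (padding with zeros). -/
def RevLexGE (α β : List ℕ) : Prop :=
  α = β ∨ ∃ i, (∀ j < i, α.getD j 0 = β.getD j 0) ∧ α.getD i 0 < β.getD i 0

/-! ### Uncolored (ordinary) versions, for `QSym` -/

namespace Uncolored

/-- A composition: a list of positive integers. -/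
def IsComposition (α : List ℕ) : Prop := ∀ a ∈ α, 1 ≤ a

/-- `β ⪯ α`: the composition `α` is obtained by summing adjacent parts of `β`. -/
def RefinesC (β α : List ℕ) : Prop :=
  ∃ P : List (List ℕ), (∀ p ∈ P, p ≠ []) ∧ P.flatten = β ∧ P.map List.sum = α

/-- A monomial `x_{i_1}^{a_1} ⋯ x_{i_m}^{a_m}` recorded by its exponents and its
strictly increasing positive indices. -/
abbrev MonoU := List ℕ × List ℕ

/-- A quasisymmetric "series", recorded by its coefficient function on monomials.
`QSym` is the span of the monomial functions `MU α` inside this space. -/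
abbrev QSymU := MonoU → ℚ

/-- Validity of a monomial: matching lengths, strictly increasing positive indices,
positive exponents. -/
def ValidMonoU (m : MonoU) : Prop :=
  m.1.length = m.2.length ∧ m.2.Chain' (· < ·) ∧ (∀ j ∈ m.2, 1 ≤ j) ∧ ∀ a ∈ m.1, 1 ≤ a

open Classical in
/-- The monomial quasisymmetric function `M_α`. -/
noncomputable def MU (α : List ℕ) : QSymU := fun m =>
  if m.1 = α ∧ ValidMonoU m then 1 else 0

/-- The fundamental quasisymmetric function `F_α = Σ_{β ⪯ α} M_β`. -/
noncomputable def FU (α : List ℕ) : QSymU :=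
  ∑ᶠ β ∈ {β : List ℕ | RefinesC β α}, MU β

/-- An immaculate tableau of shape `α`: positive integer entries, rows weakly increasing
left to right, first column strictly increasing top to bottom. -/
def IsIT (α : List ℕ) (f : Filling) : Prop :=
  f.map List.length = α ∧
  (∀ row ∈ f, row.Chain' (· ≤ ·)) ∧
  (f.filterMap List.head?).Chain' (· < ·) ∧
  (∀ x ∈ f.flatten, 1 ≤ x)

/-- The number of boxes of `f` with entry `v`. -/
def countOf (f : Filling) (v : ℕ) : ℕ := (f.flatten.filter (fun x => x == v)).length

/-- The monomial `x^T` of an immaculate tableau `T` of type `β`: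
`x_1^{β_1} ⋯ x_h^{β_h}` (zero exponents skipped). -/
def monoOfU (f : Filling) : MonoU :=
  let vs := ((List.range (maxEntry f)).map (· + 1)).filter (fun v => decide (countOf f v ≠ 0))
  (vs.map (countOf f), vs)

/-- The dual immaculate function `𝔖*_α = Σ_T x^T`, summed over all immaculate tableaux
of shape `α`. -/
noncomputable def dualImmU (α : List ℕ) : QSymU := fun m =>
  (Set.ncard {f : Filling | IsIT α f ∧ monoOfU f = m} : ℚ)

/-- The descent composition `co(U)` of a standard immaculate tableau. -/
def descComp (f : Filling) : List ℕ :=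
  if nBoxes f = 0 then [] else compOf (descList f) (nBoxes f)

/-- `L_{α,β}`: the number of standard immaculate tableaux of shape `α` with descent
composition `β`. -/
noncomputable def LU (α β : List ℕ) : ℕ :=
  Set.ncard {f : Filling | IsIT α f ∧ IsStandardF f ∧ descComp f = β}

/-- Edges of the immaculate descent graph `𝔇^n`. -/
def IsEdgeU (α β : List ℕ) : Prop := β ≠ α ∧ LU α β ≠ 0

/-- Directed paths from `α` to `β` in the immaculate descent graph, recorded by their
lists of successive vertices; `[α]` is the empty path at `α`. -/
def PathsU (α β : List ℕ) : Set (List (List ℕ)) :=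
  {p | p.head? = some α ∧ p.getLast? = some β ∧ p.Chain' IsEdgeU}

/-- The signed weight `(-1)^{ℓ(𝒫)} prod(𝒫)` of a path. -/
noncomputable def pathWeightU (p : List (List ℕ)) : ℚ :=
  ((-1 : ℚ)) ^ (p.length - 1) * ((p.zip p.tail).map (fun e => (LU e.1 e.2 : ℚ))).prod

/-- `L⁻¹_{α,β} = Σ_𝒫 (-1)^{ℓ(𝒫)} prod(𝒫)`, over directed paths from `α` to `β` in `𝔇^n`. -/
noncomputable def LinvU (α β : List ℕ) : ℚ :=
  ∑ᶠ p ∈ PathsU α β, pathWeightU p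

end Uncolored

end ColoredImm

namespace ColoredImm

/-! ### Part 1: elementary lemmas on series -/
section part1
open scoped Classical
variable {A : Type*}

def neS (I : Sentence A) : Sentence A := I.filter (fun w => !w.isEmpty)

lemma neS_sentence (I : Sentence A) : IsSentence (neS I) := by
  intro w hw
  simp [neS] at hw
  exact hw.2

lemma neS_of_sentence {I : Sentence A} (h : IsSentence I) : neS I = I := by
  unfold neS
  rw [List.filter_eq_self]
  intro w hw
  simpa using h w hw

@[simp] lemma neS_nil : neS ([] : Sentence A) = [] := rfl
@[simp] lemma neS_append (I J : Sentence A) : neS (I ++ J) = neS I ++ neS J := by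
  simp [neS]
@[simp] lemma neS_cons_nil (I : Sentence A) : neS ([] :: I) = neS I := by simp [neS]
lemma neS_cons {w : List A} (hw : w ≠ []) (I : Sentence A) : neS (w :: I) = w :: neS I := by
  simp [neS, hw]

lemma Hw_eq (w : List A) : Hw w = Hd (neS [w]) := by
  unfold Hw
  cases w <;> simp [neS]

lemma mulN_Hd (f : NSymA A) (P I : Sentence A) :
    mulN f (Hd P) I = if P <:+ I then f (I.take (I.length - P.length)) else 0 := by
  unfold mulN Hd
  split_ifs with h
  · obtain ⟨J, rfl⟩ := h
    rw [Finset.sum_eq_single J.length]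
    · simp
    · intro b hb hbJ
      rw [if_neg]
      · simp
      · intro h2
        apply hbJ
        have := congrArg List.length h2
        simp at this hb
        omega
    · intro h2; simp at h2
  · apply Finset.sum_eq_zero
    intro b _
    rw [if_neg]
    · simp
    · intro h2
      exact h (h2 ▸ List.drop_suffix _ _)

lemma mulN_mulN_Hd (f : NSymA A) (P Q : Sentence A) :
    mulN (mulN f (Hd P)) (Hd Q) = mulN f (Hd (P ++ Q)) := by
  funext I
  rw [mulN_Hd (mulN f (Hd P)), mulN_Hd f (P ++ Q)]
  by_cases hQ : Q <:+ I
  · obtain ⟨J, rfl⟩ := hQ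
    simp only [List.suffix_append, if_true, mulN_Hd, List.length_append]
    have e1 : J.length + Q.length - Q.length = J.length := by omega
    have e2 : J.length + Q.length - (P.length + Q.length) = J.length - P.length := by omega
    simp only [e1, e2, List.take_left]
    have : (P ++ Q <:+ J ++ Q) ↔ P <:+ J := by
      constructor
      · rintro ⟨L, h⟩
        rw [← List.append_assoc] at h
        exact ⟨L, List.append_cancel_right h⟩
      · rintro ⟨L, rfl⟩
        exact ⟨L, by simp⟩
    simp only [this]
    split_ifs with h
    · rw [List.take_append_of_le_length (by omega)]
    · rfl
  · rw [if_neg hQ, if_neg]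
    intro h
    exact hQ ((List.suffix_append P Q).trans h)

lemma Hd_mul (P Q : Sentence A) : mulN (Hd P) (Hd Q) = Hd (P ++ Q) := by
  funext I
  rw [mulN_Hd]
  unfold Hd
  by_cases h : Q <:+ I
  · obtain ⟨J, rfl⟩ := h
    simp
  · rw [if_neg h, if_neg]
    rintro rfl
    exact h (List.suffix_append _ _)

/-- `mulN` as a bilinear map. -/
def mulL : NSymA A →ₗ[ℚ] NSymA A →ₗ[ℚ] NSymA A :=
  LinearMap.mk₂ ℚ mulN
    (by intro a b c; funext I; simp [mulN, add_mul, Finset.sum_add_distrib])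
    (by intro a b c; funext I; simp [mulN, Finset.mul_sum, mul_assoc])
    (by intro a b c; funext I; simp [mulN, mul_add, Finset.sum_add_distrib])
    (by intro a b c; funext I; simp [mulN, Finset.mul_sum, mul_left_comm])

lemma mulL_apply (f g : NSymA A) : mulL f g = mulN f g := rfl

lemma mulN_one (f : NSymA A) : mulN f (Hd []) = f := by
  funext I; simp [mulN_Hd]

/-! ### Splittings of words -/

def spl : List A → List (List A × List A)
  | [] => [([], [])]
  | x :: w => ([], x :: w) :: (spl w).map (fun p => (x :: p.1, p.2))

lemma spl_eq (w : List A) :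
    spl w = (List.range (w.length + 1)).map (fun t => (w.take t, w.drop t)) := by
  induction w with
  | nil => simp [spl]
  | cons x w ih =>
    rw [spl, ih, List.length_cons, List.range_succ_eq_map (n := w.length + 1)]
    simp [Function.comp_def]

lemma mem_spl {w : List A} {p : List A × List A} : p ∈ spl w ↔ p.1 ++ p.2 = w := by
  rw [spl_eq]
  simp only [List.mem_map, List.mem_range]
  constructor
  · rintro ⟨t, _, rfl⟩; simp
  · rintro rfl
    exact ⟨p.1.length, by simp, by simp⟩

lemma spl_nodup (w : List A) : (spl w).Nodup := by
  induction w with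
  | nil => simp [spl]
  | cons x w ih =>
    rw [spl, List.nodup_cons]
    constructor
    · simp
    · apply ih.map
      rintro ⟨a, b⟩ ⟨c, d⟩ h
      simpa using h

lemma spl_snoc (c : List A) (x : A) :
    spl (c ++ [x]) = (spl c).map (fun p => (p.1, p.2 ++ [x])) ++ [(c ++ [x], [])] := by
  induction c with
  | nil => simp [spl]
  | cons y c ih => simp [spl, ih, Function.comp_def]

lemma spl_triple {M : Type*} [AddCommMonoid M] (φ : List A → List A → List A → M) (w : List A) :
    ((spl w).map fun p => ((spl p.1).map fun q => φ q.1 q.2 p.2).sum).sum =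
    ((spl w).map fun p => ((spl p.2).map fun q => φ p.1 q.1 q.2).sum).sum := by
  induction w generalizing φ with
  | nil => simp [spl]
  | cons x w ih =>
    have h := ih (fun a b c => φ (x :: a) b c)
    simp only [spl, List.map_cons, List.sum_cons, List.map_map, Function.comp_def,
      List.sum_map_add, List.map_nil, List.sum_nil, add_zero] at h ⊢
    rw [h]
    abel

lemma spl_last {M : Type*} [AddCommMonoid M] (φ : List A → M) (w : List A) :
    ((spl w).map fun p => if p.2 = [] then φ p.1 else 0).sum = φ w := by
  induction w generalizing φ with
  | nil => simp [spl]
  | cons x w ih =>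
    simpa [spl, Function.comp_def] using ih (fun a => φ (x :: a))

/-! ### Word operators -/

abbrev WOp (A : Type*) := Module.End ℚ (List A → NSymA A)

def wordOp (b : List A) : WOp A :=
  LinearMap.funLeft ℚ (NSymA A) (fun v : List A => v ++ b)

lemma wordOp_apply (b : List A) (Φ : List A → NSymA A) (v : List A) :
    wordOp b Φ v = Φ (v ++ b) := rfl

lemma wordOp_mul (a b : List A) : wordOp a * wordOp b = wordOp (a ++ b) := by
  apply LinearMap.ext; intro Φ; funext v
  simp [Module.End.mul_apply, wordOp_apply]

lemma wordOp_nil : wordOp ([] : List A) = 1 := by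
  apply LinearMap.ext; intro Φ; funext v
  simp [wordOp_apply]

noncomputable def GG : List A → List A → WOp A
  | [], y => wordOp y
  | x :: s, y => -(wordOp y * GG s [x]) + GG s (x :: y)

noncomputable def Trev : List A → WOp A
  | [] => 1
  | x :: s => - GG s [x]

noncomputable def TT (w : List A) : WOp A := Trev w.reverse

@[simp] lemma TT_nil : TT ([] : List A) = 1 := rfl

lemma GG_eq (s y : List A) :
    GG s y = ((spl s.reverse).map fun p => wordOp (p.2 ++ y) * TT p.1).sum := by
  induction s generalizing y with
  | nil => simp [GG, spl]
  | cons x s ih =>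
    rw [GG, List.reverse_cons, spl_snoc, ih (x :: y)]
    have : TT (s.reverse ++ [x]) = - GG s [x] := by simp [TT, Trev]
    simp [Function.comp_def, this]
    have h2 : wordOp y * -GG s [x] = -(wordOp y * GG s [x]) := LinearMap.comp_neg _ _
    rw [h2, add_comm]

lemma TT_conv (c : List A) :
    ((spl c).map fun p => wordOp p.2 * TT p.1).sum = if c = [] then 1 else 0 := by
  rcases List.eq_nil_or_concat c with rfl | ⟨s, x, rfl⟩
  · simp [spl, wordOp_nil]
  · have h := GG_eq s.reverse [x]
    have : TT (s ++ [x]) = - GG s.reverse [x] := by simp [TT, Trev]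
    rw [List.reverse_reverse] at h
    simp [spl_snoc, Function.comp_def, this, h, wordOp_nil]

noncomputable def TR : Sentence A → WOp A
  | [] => 1
  | r :: R => TR R * TT r

lemma TR_append (R S : Sentence A) : TR (R ++ S) = TR S * TR R := by
  induction R with
  | nil => simp [TR]
  | cons r R ih => simp [TR, ih, mul_assoc]

lemma TR_neS (R : Sentence A) : TR (neS R) = TR R := by
  induction R with
  | nil => rfl
  | cons r R ih =>
    by_cases h : r = []
    · subst h; simp [TR, ih]
    · rw [neS_cons h, TR, TR, ih]

noncomputable def EE (K : Sentence A) (X : WOp A) : NSymA A :=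
  ((splitsOf K).map fun p => mulN ((X * TR p.2) Hw []) (Hd (neS p.1))).sum

lemma splitsOf_cons (w : List A) (K : Sentence A) :
    splitsOf (w :: K) = (splitsOf K).flatMap fun p =>
      (spl w).map fun q => (q.1 :: p.1, q.2 :: p.2) := by
  simp [splitsOf, spl_eq, List.flatMap, Function.comp_def]

lemma sum_flatMap {M ι κ : Type*} [AddCommMonoid M] (l : List ι) (f : ι → List κ) (φ : κ → M) :
    ((l.flatMap f).map φ).sum = (l.map fun i => ((f i).map φ).sum).sum := by
  induction l with
  | nil => simp
  | cons a l ih => simp [ih]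

lemma sum_comm_list {M ι κ : Type*} [AddCommMonoid M] (l : List ι) (m : List κ) (φ : ι → κ → M) :
    (l.map fun i => (m.map fun j => φ i j).sum).sum =
    (m.map fun j => (l.map fun i => φ i j).sum).sum := by
  induction l with
  | nil => simp
  | cons a l ih => simp [ih, List.sum_map_add]

lemma splitsOf_snoc_sum {M : Type*} [AddCommMonoid M] (K : Sentence A) (w : List A)
    (φ : Sentence A × Sentence A → M) :
    ((splitsOf (K ++ [w])).map φ).sum =
    ((spl w).map fun q => ((splitsOf K).map fun p => φ (p.1 ++ [q.1], p.2 ++ [q.2])).sum).sum := by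
  induction K generalizing φ with
  | nil => simp [splitsOf_cons, splitsOf, Function.comp_def]
  | cons k K ih =>
    rw [List.cons_append, splitsOf_cons, sum_flatMap, ih]
    simp only [splitsOf_cons, sum_flatMap, List.map_map, Function.comp_def, List.cons_append]

lemma mulN_list_left {ι : Type*} (l : List ι) (φ : ι → NSymA A) (g : NSymA A) :
    mulN (l.map φ).sum g = (l.map fun i => mulN (φ i) g).sum := by
  have := map_list_sum (mulL.flip g) (l.map φ)
  simpa [mulL_apply, Function.comp_def] using this

lemma mulN_list_right {ι : Type*} (l : List ι) (φ : ι → NSymA A) (g : NSymA A) :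
    mulN g (l.map φ).sum = (l.map fun i => mulN g (φ i)).sum := by
  have := map_list_sum (mulL g) (l.map φ)
  simpa [mulL_apply, Function.comp_def] using this

lemma mulN_smul_left (c : ℚ) (f g : NSymA A) : mulN (c • f) g = c • mulN f g := by
  exact (mulL.flip g).map_smul c f

lemma mulN_smul_right (c : ℚ) (f g : NSymA A) : mulN g (c • f) = c • mulN g f := by
  exact (mulL g).map_smul c f

lemma mulN_zero_right (g : NSymA A) : mulN g 0 = 0 := by
  have := (mulL g).map_zero
  simpa [mulL_apply] using this

/-- `EE K` as a linear map -/
noncomputable def EEL (K : Sentence A) : WOp A →ₗ[ℚ] NSymA A where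
  toFun := EE K
  map_add' X Y := by
    have : ∀ f g h : NSymA A, mulN (f + g) h = mulN f h + mulN g h := by
      intro f g h
      exact (mulL.flip h).map_add f g
    simp [EE, add_mul, this, List.sum_map_add]
  map_smul' c X := by
    simp only [EE, RingHom.id_apply, List.smul_sum, List.map_map, Function.comp_def]
    simp [mulN_smul_left]

lemma EE_snoc (K : Sentence A) (w : List A) (X : WOp A) :
    EE (K ++ [w]) X =
      ((spl w).map fun q => mulN (EE K (X * TT q.2)) (Hw q.1)).sum := by
  unfold EE
  rw [splitsOf_snoc_sum]
  congr 1
  apply List.map_congr_left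
  intro q _
  rw [mulN_list_left]
  congr 1
  apply List.map_congr_left
  intro p _
  rw [Hw_eq, mulN_mulN_Hd, TR_append]
  simp [TR, mul_assoc]

lemma EE_snoc_nil (K : Sentence A) (X : WOp A) : EE (K ++ [[]]) X = EE K X := by
  rw [EE_snoc]
  simp [spl, Hw_eq, mulN_one]

lemma EE_snoc_neS (K : Sentence A) (a : List A) (X : WOp A) :
    EE (K ++ neS [a]) X = EE (K ++ [a]) X := by
  cases a with
  | nil => rw [EE_snoc_nil]; simp
  | cons x a => simp [neS]

lemma EE_pieri (K : Sentence A) (w : List A) (X : WOp A) :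
    mulN (EE K X) (Hw w) = ((spl w).map fun p => EE (K ++ [p.1]) (X * wordOp p.2)).sum := by
  simp only [EE_snoc]
  rw [spl_triple (fun a b c => mulN (EE K (X * wordOp c * TT b)) (Hw a))]
  have : ∀ p : List A × List A,
      ((spl p.2).map fun q => mulN (EE K (X * wordOp q.2 * TT q.1)) (Hw p.1)).sum =
      if p.2 = [] then mulN (EE K X) (Hw p.1) else 0 := by
    intro p
    have h := TT_conv p.2
    have h2 := congrArg (fun Y => mulL.flip (Hw p.1) (EEL K (X * Y))) h
    simp only [← List.sum_map_mul_left, map_list_sum, List.map_map, Function.comp_def] at h2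
    have e : ∀ Y, mulL.flip (Hw p.1) (EEL K Y) = mulN (EE K Y) (Hw p.1) := fun _ => rfl
    simp only [e, ← mul_assoc] at h2
    rw [h2]
    split_ifs
    · simp
    · rw [← e, mul_zero, map_zero, map_zero]
  simp only [this]
  rw [spl_last (fun a => mulN (EE K X) (Hw a))]

end part1
end ColoredImm
namespace ColoredImm

/-! ### Part 2: the Bernstein operators on the complete homogeneous basis -/
section part2
open scoped Classical
variable {A : Type*}

def cG : List A → List A → List (Sentence A)
  | [], y => [[y]]
  | x :: s, y => (cG s [x]).map (fun Q => Q ++ [y]) ++ cG s (x :: y)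

def compsRev : List A → List (Sentence A)
  | [] => [[]]
  | x :: s => cG s [x]

lemma flatten_nil_of_sentence {Q : Sentence A} (h : IsSentence Q) (h2 : Q.flatten = []) :
    Q = [] := by
  cases Q with
  | nil => rfl
  | cons q Q =>
    simp at h2
    exact absurd h2.1 (h q (by simp))

lemma isSentence_append {Q R : Sentence A} :
    IsSentence (Q ++ R) ↔ IsSentence Q ∧ IsSentence R := by
  simp [IsSentence, or_imp, forall_and]

lemma mem_cG (s y : List A) (hy : y ≠ []) (Q : Sentence A) :
    Q ∈ cG s y ↔ IsSentence Q ∧ ∃ Q' b, Q = Q' ++ [b ++ y] ∧ Q'.flatten ++ b = s.reverse := by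
  induction s generalizing y Q with
  | nil =>
    simp only [cG, List.mem_singleton, List.reverse_nil, List.append_eq_nil_iff]
    constructor
    · rintro rfl
      exact ⟨by simpa [IsSentence] using hy, [], [], by simp⟩
    · rintro ⟨hQ, Q', b, rfl, h1, rfl⟩
      rw [isSentence_append] at hQ
      rw [flatten_nil_of_sentence hQ.1 h1]
      simp
  | cons x s ih =>
    simp only [cG, List.mem_append, List.mem_map]
    constructor
    · rintro (⟨Q1, h1, rfl⟩ | h)
      · rw [ih _ (by simp)] at h1
        obtain ⟨hs, Q', b, rfl, h2⟩ := h1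
        refine ⟨isSentence_append.2 ⟨hs, by simpa [IsSentence] using hy⟩, _, [], rfl, ?_⟩
        simp [← h2]
      · rw [ih _ (by simp)] at h
        obtain ⟨hs, Q', b, rfl, h2⟩ := h
        exact ⟨hs, Q', b ++ [x], by simp, by simp [← h2]⟩
    · rintro ⟨hs, Q', b, rfl, h2⟩
      rcases List.eq_nil_or_concat b with rfl | ⟨b', z, rfl⟩
      · left
        rw [isSentence_append] at hs
        rcases List.eq_nil_or_concat Q' with rfl | ⟨Q1, c, rfl⟩
        · simp at h2
        · have hc : c ≠ [] := hs.1 c (by simp)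
          rcases List.eq_nil_or_concat c with rfl | ⟨c', z, rfl⟩
          · exact absurd rfl hc
          · simp only [List.concat_eq_append, List.flatten_append, List.flatten_cons,
              List.flatten_nil, List.append_nil, List.reverse_cons] at h2
            rw [← List.append_assoc] at h2
            obtain ⟨h3, h4⟩ := List.append_inj' h2 rfl
            simp at h4
            subst h4
            refine ⟨_, (ih _ (by simp) _).2 ⟨hs.1, Q1, c', by simp, h3⟩, by simp⟩
      · right
        simp only [List.concat_eq_append, List.reverse_cons] at h2
        rw [← List.append_assoc] at h2
        obtain ⟨h3, h4⟩ := List.append_inj' h2 rfl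
        simp at h4
        subst h4
        refine (ih _ (by simp) _).2 ⟨hs, Q', b', by simp, h3⟩

lemma nodup_cG (s y : List A) (hy : y ≠ []) : (cG s y).Nodup := by
  induction s generalizing y with
  | nil => simp [cG]
  | cons x s ih =>
    rw [cG, List.nodup_append']
    refine ⟨(ih _ (by simp)).map ?_, ih _ (by simp), ?_⟩
    · intro a b h
      simpa using h
    · intro Q h1 h2
      rw [mem_cG _ _ (by simp)] at h2
      obtain ⟨_, Q', b, rfl, _⟩ := h2
      simp only [List.mem_map] at h1
      obtain ⟨Q1, _, h⟩ := h1
      have := (List.append_inj' h rfl).2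
      have := congrArg (fun l => (l.map List.length).sum) this
      simp at this
      omega

lemma mem_compsRev (s : List A) (Q : Sentence A) :
    Q ∈ compsRev s ↔ IsSentence Q ∧ Q.flatten = s.reverse := by
  cases s with
  | nil =>
    simp only [compsRev, List.mem_singleton, List.reverse_nil]
    constructor
    · rintro rfl; simp [IsSentence]
    · rintro ⟨h1, h2⟩; exact flatten_nil_of_sentence h1 h2
  | cons x s =>
    rw [compsRev, mem_cG _ _ (by simp)]
    apply and_congr_right
    intro hs
    constructor
    · rintro ⟨Q', b, rfl, h⟩
      simp [← h]
    · intro h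
      rcases List.eq_nil_or_concat Q with rfl | ⟨Q1, c, rfl⟩
      · simp at h
      · have hc : c ≠ [] := hs c (by simp)
        rcases List.eq_nil_or_concat c with rfl | ⟨c', z, rfl⟩
        · exact absurd rfl hc
        · simp only [List.concat_eq_append, List.flatten_append, List.flatten_cons,
              List.flatten_nil, List.append_nil, List.reverse_cons] at h
          rw [← List.append_assoc] at h
          obtain ⟨h3, h4⟩ := List.append_inj' h rfl
          simp at h4
          subst h4
          exact ⟨Q1, c', by simp, h3⟩

lemma nodup_compsRev (s : List A) : (compsRev s).Nodup := by
  cases s with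
  | nil => simp [compsRev]
  | cons x s => exact nodup_cG _ _ (by simp)

/-- signed reversed concatenation -/
noncomputable def sg (Q : Sentence A) : WOp A := ((-1 : ℚ)) ^ Q.length • wordOp Q.reverse.flatten

lemma sg_append (Q R : Sentence A) : sg (Q ++ R) = sg R * sg Q := by
  unfold sg
  rw [smul_mul_smul_comm, wordOp_mul]
  simp [pow_add, mul_comm]

lemma sg_single (y : List A) : sg [y] = - wordOp y := by
  apply LinearMap.ext; intro Φ; funext v
  simp [sg]

lemma GG_sum (s y : List A) : GG s y = - ((cG s y).map sg).sum := by
  induction s generalizing y with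
  | nil => simp [GG, cG, sg_single]
  | cons x s ih =>
    have h : ∀ Q : Sentence A, sg (Q ++ [y]) = - (wordOp y * sg Q) := by
      intro Q
      rw [sg_append]
      rw [sg_single]
      exact LinearMap.neg_comp _ _
    have h3 : wordOp y * -((cG s [x]).map sg).sum = -(wordOp y * ((cG s [x]).map sg).sum) :=
      LinearMap.comp_neg _ _
    have h4 : ∀ l : List (Sentence A), (l.map fun Q => -(wordOp y * sg Q)).sum =
        -(wordOp y * (l.map sg).sum) := by
      intro l
      induction l with
      | nil => simp
      | cons a l ihl => simp only [List.map_cons, List.sum_cons, ihl, mul_add, neg_add]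
    simp only [GG, cG, ih, List.map_append, List.sum_append, List.map_map, Function.comp_def, h,
      h4, h3]
    abel

lemma TT_sum (w : List A) : TT w = ((compsRev w.reverse).map sg).sum := by
  unfold TT
  cases w.reverse with
  | nil => simp [Trev, compsRev, sg, wordOp_nil]
  | cons x s => rw [Trev, compsRev, GG_sum, neg_neg]

def refsL : Sentence A → List (Sentence A)
  | [] => [[]]
  | r :: R => (compsRev r.reverse).flatMap fun Q => (refsL R).map fun Q' => Q ++ Q'

lemma TR_sum (R : Sentence A) : TR R = ((refsL R).map sg).sum := by
  induction R with
  | nil => simp [TR, refsL, sg, wordOp_nil]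
  | cons r R ih =>
    rw [TR, refsL, sum_flatMap, ih, TT_sum, ← List.sum_map_mul_left]
    simp [Function.comp_def, sg_append, List.sum_map_mul_right]

lemma mem_refsL {R : Sentence A} (hR : IsSentence R) (Q : Sentence A) :
    Q ∈ refsL R ↔ IsSentence Q ∧ Refines Q R := by
  induction R generalizing Q with
  | nil =>
    simp only [refsL, List.mem_singleton]
    constructor
    · rintro rfl
      exact ⟨by simp [IsSentence], [], by simp⟩
    · rintro ⟨_, P, _, h2, h3⟩
      simp at h3
      subst h3
      simpa using h2.symm
  | cons r R ih =>
    have hR' : IsSentence R := fun w hw => hR w (by simp [hw])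
    simp only [refsL, List.mem_flatMap, List.mem_map, mem_compsRev, ih hR', List.reverse_reverse]
    constructor
    · rintro ⟨Q1, ⟨h1, h2⟩, Q2, ⟨h3, P, h4, h5, h6⟩, rfl⟩
      refine ⟨isSentence_append.2 ⟨h1, h3⟩, Q1 :: P, ?_, ?_, ?_⟩
      · intro p hp
        rcases List.mem_cons.1 hp with rfl | hp
        · rintro rfl
          simp at h2
          exact hR r (by simp) h2
        · exact h4 p hp
      · simp [h5]
      · simp [h6, h2]
    · rintro ⟨hs, P, h4, h5, h6⟩
      cases P with
      | nil => simp at h6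
      | cons Q1 P =>
        simp only [List.flatten_cons] at h5
        subst h5
        simp only [List.map_cons, List.cons.injEq] at h6
        rw [isSentence_append] at hs
        exact ⟨Q1, ⟨hs.1, h6.1⟩, P.flatten, ⟨hs.2, P, fun p hp => h4 p (by simp [hp]), rfl, h6.2⟩,
          rfl⟩

lemma prefix_unique {Q1 Q2 R1 R2 : Sentence A} (h1 : IsSentence Q1) (h2 : IsSentence R1)
    (hf : Q1.flatten = R1.flatten) (h : Q1 ++ Q2 = R1 ++ R2) : Q1 = R1 := by
  induction Q1 generalizing R1 with
  | nil => exact (flatten_nil_of_sentence h2 (by simpa using hf.symm)).symm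
  | cons q Q1 ih =>
    cases R1 with
    | nil => exact flatten_nil_of_sentence h1 (by simpa using hf)
    | cons r R1 =>
      simp only [List.cons_append, List.cons.injEq] at h
      obtain ⟨rfl, h⟩ := h
      rw [ih (fun w hw => h1 w (by simp [hw])) (fun w hw => h2 w (by simp [hw]))
        (by simpa using hf) h]

lemma nodup_refsL (R : Sentence A) : (refsL R).Nodup := by
  induction R with
  | nil => simp [refsL]
  | cons r R ih =>
    rw [refsL, List.nodup_flatMap]
    refine ⟨fun Q _ => ih.map (fun a b h => by simpa using h), ?_⟩
    refine List.Pairwise.imp_of_mem ?_ (nodup_compsRev _)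
    intro Q1 Q2 h1 h2 hne
    intro Q h3 h4
    simp only [List.mem_map] at h3 h4
    obtain ⟨a, _, rfl⟩ := h3
    obtain ⟨b, _, h⟩ := h4
    rw [mem_compsRev] at h1 h2
    exact hne (prefix_unique h1.1 h2.1 (h1.2.trans h2.2.symm) h.symm)

/-! finsum lemmas -/

lemma finsum_list {ι κ M : Type*} [AddCommMonoid M] (l : List κ) (f : ι → κ → M)
    (h : ∀ b ∈ l, (Function.support fun a => f a b).Finite) :
    ((Function.support fun a => (l.map fun b => f a b).sum).Finite) ∧
    ∑ᶠ a, (l.map fun b => f a b).sum = (l.map fun b => ∑ᶠ a, f a b).sum := by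
  induction l with
  | nil => simp
  | cons b l ih =>
    obtain ⟨h1, h2⟩ := ih (fun c hc => h c (by simp [hc]))
    have h3 := h b (by simp)
    simp only [List.map_cons, List.sum_cons]
    constructor
    · exact (h3.union h1).subset (Function.support_add _ _)
    · rw [finsum_add_distrib h3 h1, h2]

lemma finsum_ite_single {ι M : Type*} [AddCommMonoid M] (i : ι) [∀ a : ι, Decidable (a = i)]
    (f : ι → M) :
    ((Function.support fun a => if a = i then f a else 0).Finite) ∧
    ∑ᶠ a, (if a = i then f a else 0) = f i := by
  constructor
  · apply (Set.finite_singleton i).subset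
    intro a ha
    by_contra h
    simp at h
    simp [h] at ha
  · rw [finsum_eq_single _ i]
    · simp
    · intro x hx; simp [hx]

lemma finsum_nodup {ι M : Type*} [AddCommMonoid M] (l : List ι) (hl : l.Nodup)
    [∀ a : ι, Decidable (a ∈ l)] (f : ι → M) :
    ((Function.support fun a => if a ∈ l then f a else 0).Finite) ∧
    ∑ᶠ a, (if a ∈ l then f a else 0) = (l.map f).sum := by
  have hs : (Function.support fun a => if a ∈ l then f a else 0) ⊆ (l.toFinset : Set ι) := by
    intro a ha
    by_contra h
    simp at h
    simp [h] at ha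
  refine ⟨(Finset.finite_toSet _).subset hs, ?_⟩
  rw [finsum_eq_sum_of_support_subset _ hs, ← List.sum_toFinset _ hl]
  apply Finset.sum_congr rfl
  intro a ha
  simp at ha
  simp [ha]

lemma finsum_mem_ite {ι M : Type*} [AddCommMonoid M] (p : ι → Prop) (f : ι → M) :
    ∑ᶠ a ∈ {a | p a}, f a = ∑ᶠ a, if p a then f a else 0 := by
  apply finsum_congr
  intro a
  rw [finsum_eq_if]
  rfl

noncomputable def comb (l : List (ℚ × Sentence A)) : NSymA A := (l.map fun t => t.1 • Hd t.2).sum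

lemma list_sum_apply {ι : Type*} (l : List ι) (φ : ι → NSymA A) (I : Sentence A) :
    (l.map φ).sum I = (l.map fun i => φ i I).sum := by
  induction l with
  | nil => rfl
  | cons a l ih => simp [ih]

lemma pairNQ_comb (l : List (ℚ × Sentence A)) (hl : ∀ t ∈ l, IsSentence t.2) (G : QSymA A) :
    pairNQ (comb l) G = (l.map fun t => t.1 * G (t.2, List.range' 1 t.2.length)).sum := by
  unfold pairNQ
  rw [finsum_mem_ite]
  have : ∀ I : Sentence A, (if IsSentence I then comb l I * G (I, List.range' 1 I.length) else 0)
      = (l.map fun t => if I = t.2 then t.1 * G (I, List.range' 1 I.length) else 0).sum := by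
    intro I
    split_ifs with h
    · rw [comb, list_sum_apply, ← List.sum_map_mul_right]
      congr 1
      apply List.map_congr_left
      intro t _
      simp [Hd]
    · symm
      apply List.sum_eq_zero
      intro x hx
      simp only [List.mem_map] at hx
      obtain ⟨t, ht, rfl⟩ := hx
      rw [if_neg]
      rintro rfl
      exact h (hl t ht)
  simp only [this]
  rw [(finsum_list l _ ?_).2]
  · congr 1
    apply List.map_congr_left
    intro t _
    exact (finsum_ite_single t.2 (fun I => t.1 * G (I, List.range' 1 I.length))).2
  · intro t _
    exact (finsum_ite_single t.2 (fun I => t.1 * G (I, List.range' 1 I.length))).1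

lemma restrict_fst (ws : Sentence A) (js : List ℕ) (h : ws.length = js.length) :
    (restrictMono ws js).1 = neS ws := by
  induction ws generalizing js with
  | nil => simp [restrictMono]
  | cons w ws ih =>
    cases js with
    | nil => simp at h
    | cons j js =>
      have := ih js (by simpa using h)
      simp only [restrictMono, List.zip_cons_cons] at this ⊢
      by_cases hw : w = []
      · simp [hw, this]
      · simp [hw, this, neS_cons]

lemma restrict_valid (ws : Sentence A) (n : ℕ) :
    ValidMono (restrictMono ws (List.range' 1 n)) := by
  have hsub : ((restrictMono ws (List.range' 1 n)).2).Sublist (List.range' 1 n) := by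
    simp only [restrictMono]
    refine (List.Sublist.map _ List.filter_sublist).trans ?_
    generalize List.range' 1 n = js
    induction ws generalizing js with
    | nil => simp
    | cons w ws ih =>
      cases js with
      | nil => simp
      | cons j js => simpa using ih js
  refine ⟨by simp [restrictMono], ?_, ?_, ?_⟩
  · have : (List.range' 1 n).Pairwise (· < ·) := List.pairwise_lt_range'
    exact (this.sublist hsub).isChain
  · intro j hj
    have := hsub.subset hj
    simp at this
    omega
  · intro w hw
    simp [restrictMono] at hw
    exact hw.2

lemma splitsOf_length {K : Sentence A} {p : Sentence A × Sentence A} (hp : p ∈ splitsOf K) :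
    p.1.length = K.length ∧ p.2.length = K.length := by
  induction K generalizing p with
  | nil => simp [splitsOf] at hp; simp [hp]
  | cons k K ih =>
    rw [splitsOf_cons] at hp
    simp only [List.mem_flatMap, List.mem_map] at hp
    obtain ⟨q, hq, r, _, rfl⟩ := hp
    simp [ih hq]

lemma MQ_restrict (I ws : Sentence A) (n : ℕ) (h : ws.length = n) :
    MQ I (restrictMono ws (List.range' 1 n)) = if I = neS ws then 1 else 0 := by
  unfold MQ
  rw [restrict_fst _ _ (by simpa using h)]
  simp [restrict_valid, eq_comm]

lemma mulQ_MQ (I S K : Sentence A) :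
    mulQ (MQ I) (MQ S) (K, List.range' 1 K.length) =
    ((splitsOf K).map fun p => if I = neS p.1 ∧ S = neS p.2 then (1 : ℚ) else 0).sum := by
  unfold mulQ
  congr 1
  apply List.map_congr_left
  intro p hp
  have := splitsOf_length hp
  simp only
  rw [MQ_restrict _ _ _ this.1, MQ_restrict _ _ _ this.2]
  split_ifs <;> simp_all

/-- flattened list of splittings -/
def LL (l : List (ℚ × Sentence A)) : List (ℚ × Sentence A × Sentence A) :=
  l.flatMap fun t => (splitsOf t.2).map fun p => (t.1, neS p.1, neS p.2)

lemma LL_sentence {l : List (ℚ × Sentence A)} {u : ℚ × Sentence A × Sentence A} (hu : u ∈ LL l) :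
    IsSentence u.2.1 ∧ IsSentence u.2.2 := by
  simp only [LL, List.mem_flatMap, List.mem_map] at hu
  obtain ⟨_, _, _, _, rfl⟩ := hu
  exact ⟨neS_sentence _, neS_sentence _⟩

lemma rperp_comb (l : List (ℚ × Sentence A)) (hl : ∀ t ∈ l, IsSentence t.2) (S : Sentence A) :
    rperp (MQ S) (comb l) =
      ((LL l).map fun u => if S = u.2.2 then u.1 • Hd u.2.1 else 0).sum := by
  unfold rperp
  rw [finsum_mem_ite]
  have : ∀ I : Sentence A,
      (if IsSentence I then pairNQ (comb l) (mulQ (MQ I) (MQ S)) • Hd I else 0)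
      = ((LL l).map fun u => if I = u.2.1 then (if S = u.2.2 then u.1 • Hd I else 0) else 0).sum := by
    intro I
    split_ifs with h
    · rw [pairNQ_comb l hl]
      simp only [mulQ_MQ, LL, sum_flatMap, List.map_map, Function.comp_def, ← List.sum_map_mul_left,
        List.sum_smul]
      congr 1
      apply List.map_congr_left
      intro t _
      congr 1
      apply List.map_congr_left
      intro p _
      by_cases h1 : I = neS p.1 <;> by_cases h2 : S = neS p.2 <;> simp [h1, h2]
    · symm
      apply List.sum_eq_zero
      intro x hx
      simp only [List.mem_map] at hx
      obtain ⟨t, ht, rfl⟩ := hx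
      rw [if_neg]
      rintro rfl
      exact h (LL_sentence ht).1
  simp only [this]
  rw [(finsum_list _ _ ?_).2]
  · congr 1
    apply List.map_congr_left
    intro u _
    exact (finsum_ite_single u.2.1 (fun I => if S = u.2.2 then u.1 • Hd I else 0)).2
  · intro u _
    exact (finsum_ite_single u.2.1 (fun I => if S = u.2.2 then u.1 • Hd I else 0)).1

lemma Fperp_comb (l : List (ℚ × Sentence A)) (hl : ∀ t ∈ l, IsSentence t.2) (Q : Sentence A) :
    ∑ᶠ S ∈ {S : Sentence A | Refines Q S}, rperp (MQ S) (comb l) =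
      ((LL l).map fun u => if Refines Q u.2.2 then u.1 • Hd u.2.1 else 0).sum := by
  rw [finsum_mem_ite]
  have : ∀ S : Sentence A,
      (if Refines Q S then rperp (MQ S) (comb l) else 0)
      = ((LL l).map fun u => if S = u.2.2 then (if Refines Q S then u.1 • Hd u.2.1 else 0)
          else 0).sum := by
    intro S
    rw [rperp_comb l hl]
    split_ifs with h
    · rfl
    · simp
  simp only [this]
  rw [(finsum_list _ _ ?_).2]
  · congr 1
    apply List.map_congr_left
    intro u _
    exact (finsum_ite_single u.2.2 (fun S => if Refines Q S then u.1 • Hd u.2.1 else 0)).2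
  · intro u _
    exact (finsum_ite_single u.2.2 (fun S => if Refines Q S then u.1 • Hd u.2.1 else 0)).1

lemma sg_apply (v : List A) (Q : Sentence A) :
    (wordOp v * sg Q) Hw [] = ((-1 : ℚ)) ^ Q.length • Hw (v ++ Q.reverse.flatten) := by
  simp [sg, Module.End.mul_apply, wordOp_apply]

lemma Bern_comb (l : List (ℚ × Sentence A)) (hl : ∀ t ∈ l, IsSentence t.2) (v : List A) :
    Bern v (comb l) = (l.map fun t => t.1 • EE t.2 (wordOp v)).sum := by
  unfold Bern
  simp only [Fperp_comb l hl]
  rw [finsum_mem_ite]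
  have : ∀ Q : Sentence A,
      (if IsSentence Q then ((-1 : ℚ)) ^ Q.length • mulN (Hw (v ++ Q.reverse.flatten))
        ((LL l).map fun u => if Refines Q u.2.2 then u.1 • Hd u.2.1 else 0).sum else 0)
      = ((LL l).map fun u => if Q ∈ refsL u.2.2 then
          u.1 • mulN ((wordOp v * sg Q) Hw []) (Hd u.2.1) else 0).sum := by
    intro Q
    split_ifs with h
    · rw [mulN_list_right, List.smul_sum, List.map_map]
      congr 1
      apply List.map_congr_left
      intro u hu
      simp only [Function.comp_def, mem_refsL (LL_sentence hu).2, h, true_and]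
      split_ifs
      · rw [sg_apply, mulN_smul_right, mulN_smul_left, smul_comm]
      · rw [mulN_zero_right, smul_zero]
    · symm
      apply List.sum_eq_zero
      intro x hx
      simp only [List.mem_map] at hx
      obtain ⟨u, hu, rfl⟩ := hx
      rw [if_neg]
      rw [mem_refsL (LL_sentence hu).2]
      exact fun h2 => h h2.1
  simp only [this]
  rw [(finsum_list _ _ ?_).2]
  · have h2 : ∀ u : ℚ × Sentence A × Sentence A,
      ∑ᶠ Q, (if Q ∈ refsL u.2.2 then u.1 • mulN ((wordOp v * sg Q) Hw []) (Hd u.2.1) else 0) =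
        u.1 • mulN ((wordOp v * TR u.2.2) Hw []) (Hd u.2.1) := by
      intro u
      rw [(finsum_nodup _ (nodup_refsL _) _).2, TR_sum, ← List.sum_map_mul_left]
      have e : ((refsL u.2.2).map fun Q => wordOp v * sg Q).sum Hw [] =
          ((refsL u.2.2).map fun Q => (wordOp v * sg Q) Hw []).sum := by
        induction refsL u.2.2 with
        | nil => simp
        | cons a l ih => simp [ih]
      rw [e, mulN_list_left, List.smul_sum, List.map_map]
      rfl
    simp only [h2]
    simp only [LL, sum_flatMap, List.map_map, Function.comp_def, EE, TR_neS, List.smul_sum]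
  · intro u _
    exact (finsum_nodup _ (nodup_refsL _) _).1

/-! Pieri rule -/

lemma comb_append (l m : List (ℚ × Sentence A)) : comb (l ++ m) = comb l + comb m := by
  simp [comb]

def IsComb (f : NSymA A) : Prop := ∃ l : List (ℚ × Sentence A), (∀ t ∈ l, IsSentence t.2) ∧ f = comb l

lemma IsComb.add {f g : NSymA A} (hf : IsComb f) (hg : IsComb g) : IsComb (f + g) := by
  obtain ⟨l, hl, rfl⟩ := hf
  obtain ⟨m, hm, rfl⟩ := hg
  refine ⟨l ++ m, ?_, (comb_append _ _).symm⟩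
  intro t ht
  rcases List.mem_append.1 ht with h | h
  · exact hl t h
  · exact hm t h

lemma IsComb.zero : IsComb (0 : NSymA A) := ⟨[], by simp, by simp [comb]⟩

lemma IsComb.smul {f : NSymA A} (c : ℚ) (hf : IsComb f) : IsComb (c • f) := by
  obtain ⟨l, hl, rfl⟩ := hf
  refine ⟨l.map fun t => (c * t.1, t.2), ?_, ?_⟩
  · intro t ht
    simp only [List.mem_map] at ht
    obtain ⟨u, hu, rfl⟩ := ht
    exact hl u hu
  · simp [comb, List.smul_sum, Function.comp_def, mul_smul]

lemma IsComb.sum {ι : Type*} (l : List ι) (φ : ι → NSymA A) (h : ∀ i ∈ l, IsComb (φ i)) :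
    IsComb (l.map φ).sum := by
  induction l with
  | nil => exact IsComb.zero
  | cons a l ih =>
    simp only [List.map_cons, List.sum_cons]
    exact (h a (by simp)).add (ih fun i hi => h i (by simp [hi]))

lemma IsComb.hd {I : Sentence A} (h : IsSentence I) : IsComb (Hd I) :=
  ⟨[(1, I)], by simpa using h, by simp [comb]⟩

lemma IsComb.Bern {f : NSymA A} (hf : IsComb f) (v : List A) : IsComb (Bern v f) := by
  obtain ⟨l, hl, rfl⟩ := hf
  rw [Bern_comb l hl]
  apply IsComb.sum
  intro t _
  apply IsComb.smul
  unfold EE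
  apply IsComb.sum
  intro p _
  rw [TR_sum, ← List.sum_map_mul_left]
  have e : ((refsL p.2).map fun Q => wordOp v * sg Q).sum Hw [] =
      ((refsL p.2).map fun Q => (wordOp v * sg Q) Hw []).sum := by
    induction refsL p.2 with
    | nil => simp
    | cons a l ih => simp [ih]
  rw [e, mulN_list_left]
  apply IsComb.sum
  intro Q _
  rw [sg_apply, mulN_smul_left, Hw_eq, Hd_mul]
  exact (IsComb.hd (isSentence_append.2 ⟨neS_sentence _, neS_sentence _⟩)).smul _

lemma ImmS_comb (J : Sentence A) : IsComb (ImmS J) := by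
  induction J with
  | nil => exact IsComb.hd (by simp [IsSentence])
  | cons v J ih => exact ih.Bern v

lemma comb_mul (l : List (ℚ × Sentence A)) (a : List A) :
    mulN (comb l) (Hw a) = comb (l.map fun t => (t.1, t.2 ++ neS [a])) := by
  rw [comb, mulN_list_left, comb, List.map_map]
  congr 1
  apply List.map_congr_left
  intro t _
  simp [mulN_smul_left, Hw_eq, Hd_mul]

lemma Bern_pieri {f : NSymA A} (hf : IsComb f) (v w : List A) :
    mulN (Bern v f) (Hw w) = ((spl w).map fun p => Bern (v ++ p.2) (mulN f (Hw p.1))).sum := by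
  obtain ⟨l, hl, rfl⟩ := hf
  have h : ∀ p : List A × List A, Bern (v ++ p.2) (mulN (comb l) (Hw p.1)) =
      (l.map fun t => t.1 • EE (t.2 ++ [p.1]) (wordOp v * wordOp p.2)).sum := by
    intro p
    rw [comb_mul, Bern_comb]
    · simp [Function.comp_def, EE_snoc_neS, wordOp_mul]
    · intro t ht
      simp only [List.mem_map] at ht
      obtain ⟨u, hu, rfl⟩ := ht
      exact isSentence_append.2 ⟨hl u hu, neS_sentence _⟩
  simp only [h]
  rw [sum_comm_list, Bern_comb l hl, mulN_list_left]
  congr 1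
  apply List.map_congr_left
  intro t _
  rw [mulN_smul_left, EE_pieri, List.smul_sum, List.map_map]
  rfl

/-- Bern on zero and on sums -/
lemma Bern_sum {ι : Type*} (l : List ι) (φ : ι → NSymA A) (h : ∀ i ∈ l, IsComb (φ i))
    (v : List A) : Bern v (l.map φ).sum = (l.map fun i => Bern v (φ i)).sum := by
  induction l with
  | nil =>
    have := Bern_comb ([] : List (ℚ × Sentence A)) (by simp) v
    simpa [comb] using this
  | cons a l ih =>
    have h1 := h a (by simp)
    have h2 := IsComb.sum l φ (fun i hi => h i (by simp [hi]))
    simp only [List.map_cons, List.sum_cons]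
    rw [← ih (fun i hi => h i (by simp [hi]))]
    obtain ⟨m, hm, e1⟩ := h1
    obtain ⟨n, hn, e2⟩ := h2
    rw [e1, e2, ← comb_append, Bern_comb, Bern_comb m hm, Bern_comb n hn]
    · simp
    · intro t ht
      rcases List.mem_append.1 ht with h | h
      · exact hm t h
      · exact hn t h

lemma Bern_one (v : List A) : Bern v (Hd []) = Hw v := by
  have := Bern_comb ([(1, [])] : List (ℚ × Sentence A)) (by simp [IsSentence]) v
  simpa [comb, EE, splitsOf, TR, wordOp_apply, mulN_one] using this

end part2
end ColoredImm
namespace ColoredImm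

/-! ### Part 3: tableaux -/
section part3
open scoped Classical
variable {A : Type*}

abbrev Tab (A : Type*) := List (List (A × ℕ))

def shp (T : Tab A) : Sentence A := T.map (List.map Prod.fst)
def ent (T : Tab A) : Filling := T.map (List.map Prod.snd)

def tagW (n : ℕ) (w : List A) : List (A × ℕ) := w.map fun a => (a, n)

def extT (n : ℕ) : Tab A → List A → List (Tab A)
  | [], [] => [[]]
  | [], a :: w => [[tagW n (a :: w)]]
  | r :: R, w => (spl w).flatMap fun p => (extT n R p.1).map fun R' => (r ++ tagW n p.2) :: R'

lemma tagW_fst (n : ℕ) (w : List A) : (tagW n w).map Prod.fst = w := by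
  simp [tagW, Function.comp_def]

lemma pieri_ext (n : ℕ) (T : Tab A) (w : List A) :
    mulN (ImmS (shp T)) (Hw w) = ((extT n T w).map fun T' => ImmS (shp T')).sum := by
  induction T generalizing w with
  | nil =>
    cases w with
    | nil => simp [extT, shp, Hw_eq, mulN_one]
    | cons a w =>
      have h : ImmS (shp ([tagW n (a :: w)] : Tab A)) = Bern (a :: w) (Hd []) := by
        simp [shp, tagW_fst, ImmS]
      rw [extT, List.map_cons, h, Bern_one]
      simp [shp, ImmS, Hw_eq, Hd_mul]
  | cons r R ih =>
    have h : ImmS (shp (r :: R)) = Bern (r.map Prod.fst) (ImmS (shp R)) := rfl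
    rw [h, Bern_pieri (ImmS_comb _), extT, sum_flatMap]
    congr 1
    apply List.map_congr_left
    intro p _
    rw [ih, Bern_sum _ _ (fun _ _ => ImmS_comb _), List.map_map]
    congr 1
    apply List.map_congr_left
    intro R' _
    simp [shp, tagW_fst, ImmS]

def tabsR : Sentence A → List (Tab A)
  | [] => [[]]
  | w :: C => (tabsR C).flatMap fun T => extT (C.length + 1) T w

lemma Hd_tabs (C : Sentence A) (hC : IsSentence C) :
    Hd C.reverse = ((tabsR C).map fun T => ImmS (shp T)).sum := by
  induction C with
  | nil => simp [tabsR, shp, ImmS]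
  | cons w C ih =>
    have hw : w ≠ [] := hC w (by simp)
    have e : Hd (C.reverse ++ [w]) = mulN (Hd C.reverse) (Hw w) := by
      rw [Hw_eq, Hd_mul, neS_cons hw, neS_nil]
    rw [List.reverse_cons, e, ih (fun v hv => hC v (by simp [hv])), tabsR, sum_flatMap,
      mulN_list_left]
    congr 1
    apply List.map_congr_left
    intro T _
    exact pieri_ext _ _ _

def hLT (r r' : List (A × ℕ)) : Prop := ∀ x ∈ r.head?, ∀ y ∈ r'.head?, x.2 < y.2

def RowOK (n : ℕ) (r : List (A × ℕ)) : Prop :=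
  r ≠ [] ∧ r.Pairwise (fun x y => x.2 ≤ y.2) ∧ ∀ x ∈ r, 1 ≤ x.2 ∧ x.2 ≤ n

def VT (n : ℕ) (T : Tab A) : Prop := (∀ r ∈ T, RowOK n r) ∧ T.Pairwise hLT

lemma VT_cons {n : ℕ} {r : List (A × ℕ)} {R : Tab A} :
    VT n (r :: R) ↔ RowOK n r ∧ (∀ r' ∈ R, hLT r r') ∧ VT n R := by
  simp only [VT, List.mem_cons, forall_eq_or_imp, List.pairwise_cons]
  tauto

def rwd (v : ℕ) (r : List (A × ℕ)) : List A := (r.filter (fun x => x.2 == v)).map Prod.fst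

def twd : Tab A → ℕ → List A
  | [], _ => []
  | r :: R, v => twd R v ++ rwd v r

def cut (m : ℕ) (r : List (A × ℕ)) : List (A × ℕ) := r.filter (fun x => !(x.2 == m))

def strip (m : ℕ) : Tab A → Tab A
  | [] => []
  | r :: R => if cut m r = [] then strip m R else cut m r :: strip m R

lemma mem_strip {m : ℕ} {T : Tab A} {s : List (A × ℕ)} :
    s ∈ strip m T ↔ s ≠ [] ∧ ∃ r ∈ T, cut m r = s := by
  induction T with
  | nil => simp [strip]
  | cons r R ih =>
    rw [strip]
    split_ifs with h
    · rw [ih]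
      simp only [List.mem_cons, exists_eq_or_imp, h]
      constructor
      · rintro ⟨a, b⟩; exact ⟨a, Or.inr b⟩
      · rintro ⟨a, b | b⟩
        · exact absurd b.symm a
        · exact ⟨a, b⟩
    · simp only [List.mem_cons, ih, exists_eq_or_imp]
      constructor
      · rintro (rfl | ⟨a, b⟩)
        · exact ⟨h, Or.inl rfl⟩
        · exact ⟨a, Or.inr b⟩
      · rintro ⟨a, b | b⟩
        · exact Or.inl b.symm
        · exact Or.inr ⟨a, b⟩

lemma row_decomp {n : ℕ} {r : List (A × ℕ)} (h : RowOK (n + 1) r) :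
    r = cut (n + 1) r ++ tagW (n + 1) (rwd (n + 1) r) := by
  obtain ⟨-, h1, h2⟩ := h
  induction r with
  | nil => simp [cut, rwd, tagW]
  | cons x r ih =>
    rw [List.pairwise_cons] at h1
    have ih' := ih h1.2 (fun y hy => h2 y (by simp [hy]))
    by_cases hx : x.2 = n + 1
    · have hall : ∀ y ∈ r, y.2 = n + 1 := by
        intro y hy
        have := h1.1 y hy
        have := (h2 y (by simp [hy])).2
        omega
      have e1 : cut (n + 1) r = [] := by
        simp only [cut, List.filter_eq_nil_iff]
        intro y hy
        simp [hall y hy]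
      have e2 : cut (n + 1) (x :: r) = [] := by
        simpa [cut, hx] using e1
      have e3 : tagW (n + 1) (rwd (n + 1) (x :: r)) = x :: tagW (n + 1) (rwd (n + 1) r) := by
        simp [tagW, rwd, hx]
        rw [← hx]
      rw [e2, e3, List.nil_append]
      rw [e1, List.nil_append] at ih'
      rw [← ih']
    · have e2 : cut (n + 1) (x :: r) = x :: cut (n + 1) r := by
        simp [cut, hx]
      have e3 : rwd (n + 1) (x :: r) = rwd (n + 1) r := by
        simp [rwd, hx]
      rw [e2, e3, List.cons_append, ← ih']

lemma cut_head {n : ℕ} {r : List (A × ℕ)} (h : RowOK (n + 1) r) (h2 : cut (n + 1) r ≠ []) :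
    (cut (n + 1) r).head? = r.head? := by
  conv_rhs => rw [row_decomp h]
  cases hc : cut (n + 1) r with
  | nil => exact absurd hc h2
  | cons x c => simp

lemma cut_nil_head {n : ℕ} {r : List (A × ℕ)} (h2 : cut (n + 1) r = []) :
    ∀ x ∈ r, x.2 = n + 1 := by
  intro x hx
  rw [cut, List.filter_eq_nil_iff] at h2
  simpa using h2 x hx

lemma cut_ok {n : ℕ} {r : List (A × ℕ)} (h : RowOK (n + 1) r) (h2 : cut (n + 1) r ≠ []) :
    RowOK n (cut (n + 1) r) := by
  refine ⟨h2, h.2.1.sublist List.filter_sublist, ?_⟩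
  intro x hx
  simp [cut] at hx
  have := h.2.2 x hx.1
  omega

lemma VT_strip {n : ℕ} {T : Tab A} (h : VT (n + 1) T) : VT n (strip (n + 1) T) := by
  induction T with
  | nil => simp [strip, VT]
  | cons r R ih =>
    rw [VT_cons] at h
    obtain ⟨h1, h2, h3⟩ := h
    rw [strip]
    split_ifs with hc
    · exact ih h3
    · rw [VT_cons]
      refine ⟨cut_ok h1 hc, ?_, ih h3⟩
      intro r' hr'
      rw [mem_strip] at hr'
      obtain ⟨hne, s, hs, rfl⟩ := hr'
      unfold hLT
      rw [cut_head h1 hc, cut_head (h3.1 s hs) hne]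
      exact h2 s hs

lemma twd_strip {m v : ℕ} (hv : v ≠ m) (T : Tab A) : twd (strip m T) v = twd T v := by
  have hc : ∀ r : List (A × ℕ), rwd v (cut m r) = rwd v r := by
    intro r
    unfold rwd cut
    rw [List.filter_filter]
    congr 1
    apply List.filter_congr
    intro x _
    by_cases h : x.2 = v <;> simp [h, hv]
  induction T with
  | nil => rfl
  | cons r R ih =>
    rw [strip, twd]
    split_ifs with h
    · rw [ih, ← hc r, h]; simp [rwd]
    · rw [twd, ih, hc]

lemma twd_eq_nil {v : ℕ} {T : Tab A} (h : ∀ r ∈ T, ∀ x ∈ r, x.2 ≠ v) : twd T v = [] := by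
  induction T with
  | nil => rfl
  | cons r R ih =>
    rw [twd, ih (fun s hs => h s (by simp [hs]))]
    simp only [rwd, List.nil_append, List.map_eq_nil_iff, List.filter_eq_nil_iff]
    intro x hx
    simpa using h r (by simp) x hx

lemma twd_ne_nil {v : ℕ} {T : Tab A} {r : List (A × ℕ)} (hr : r ∈ T) {x : A × ℕ} (hx : x ∈ r)
    (hv : x.2 = v) : twd T v ≠ [] := by
  induction T with
  | nil => simp at hr
  | cons s R ih =>
    rw [twd]
    intro h
    rw [List.append_eq_nil_iff] at h
    rcases List.mem_cons.1 hr with rfl | hr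
    · have := h.2
      simp only [rwd, List.map_eq_nil_iff, List.filter_eq_nil_iff] at this
      simpa [hv] using this x hx
    · exact ih hr h.1

lemma cut_append_tag {n : ℕ} {r : List (A × ℕ)} (h : RowOK n r) (w : List A) :
    cut (n + 1) (r ++ tagW (n + 1) w) = r := by
  have h1 : cut (n + 1) r = r := by
    rw [cut, List.filter_eq_self]
    intro x hx
    have := (h.2.2 x hx).2
    simp
    omega
  have h2 : cut (n + 1) (tagW (n + 1) w) = [] := by
    simp [cut, tagW]
  rw [cut] at h1 h2 ⊢
  rw [List.filter_append, h1, h2, List.append_nil]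

lemma rwd_append_tag {n : ℕ} {r : List (A × ℕ)} (h : RowOK n r) (w : List A) :
    rwd (n + 1) (r ++ tagW (n + 1) w) = w := by
  have h1 : rwd (n + 1) r = [] := by
    simp only [rwd, List.map_eq_nil_iff, List.filter_eq_nil_iff]
    intro x hx
    have := (h.2.2 x hx).2
    simp
    omega
  have h2 : rwd (n + 1) (tagW (n + 1) w) = w := by
    simp [rwd, tagW, List.filter_map, Function.comp_def]
  rw [rwd] at h1 h2 ⊢
  rw [List.filter_append, List.map_append, h1, h2, List.nil_append]

lemma RowOK_append_tag {n : ℕ} {r : List (A × ℕ)} (h : RowOK n r) (w : List A) :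
    RowOK (n + 1) (r ++ tagW (n + 1) w) := by
  have ht : ∀ y ∈ tagW (n + 1) w, y.2 = n + 1 := by
    intro y hy
    simp [tagW] at hy
    obtain ⟨_, _, rfl⟩ := hy
    rfl
  refine ⟨by simp [h.1], ?_, ?_⟩
  · rw [List.pairwise_append]
    refine ⟨h.2.1, ?_, ?_⟩
    · refine List.pairwise_of_forall_mem_list ?_
      intro x hx y hy
      rw [ht x hx, ht y hy]
    · intro x hx y hy
      rw [ht y hy]
      have := (h.2.2 x hx).2
      omega
  · intro x hx
    rcases List.mem_append.1 hx with hx | hx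
    · have := h.2.2 x hx
      omega
    · rw [ht x hx]; omega

lemma VT_all_top {n : ℕ} {r : List (A × ℕ)} {R : Tab A} (h : VT (n + 1) (r :: R))
    (hc : cut (n + 1) r = []) : R = [] := by
  rw [VT_cons] at h
  obtain ⟨h1, h2, h3⟩ := h
  cases R with
  | nil => rfl
  | cons s R =>
    exfalso
    have hs := h3.1 s (by simp)
    have hl := h2 s (by simp)
    cases r with
    | nil => exact h1.1 rfl
    | cons x r =>
      cases s with
      | nil => exact hs.1 rfl
      | cons y s =>
        have e1 := cut_nil_head hc x (by simp)
        have e2 := hl x (by simp) y (by simp)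
        have e3 := (hs.2.2 y (by simp)).2
        omega

lemma mem_extT {n : ℕ} {T : Tab A} (hT : VT n T) (w : List A) (T' : Tab A) :
    T' ∈ extT (n + 1) T w ↔ VT (n + 1) T' ∧ strip (n + 1) T' = T ∧ twd T' (n + 1) = w := by
  induction T generalizing w T' with
  | nil =>
    have key : VT (n + 1) T' → strip (n + 1) T' = [] →
        T' = [] ∨ ∃ u : List A, u ≠ [] ∧ T' = [tagW (n + 1) u] := by
      intro h1 h2
      cases T' with
      | nil => left; rfl
      | cons r R =>
        right
        rw [strip] at h2
        split_ifs at h2 with hc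
        have := VT_all_top h1 hc
        subst this
        rw [VT_cons] at h1
        have hd := row_decomp h1.1
        rw [hc, List.nil_append] at hd
        refine ⟨rwd (n + 1) r, ?_, by rw [← hd]⟩
        intro h0
        rw [h0] at hd
        exact h1.1.1 (by simpa [tagW] using hd)
    have single : ∀ u : List A, u ≠ [] → VT (n + 1) [tagW (n + 1) u] ∧
        strip (n + 1) [tagW (n + 1) u] = [] ∧ twd [tagW (n + 1) u] (n + 1) = u := by
      intro u hu
      refine ⟨?_, ?_, ?_⟩
      · rw [VT_cons]
        refine ⟨⟨by simpa [tagW] using hu, ?_, ?_⟩, by simp, by simp [VT]⟩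
        · refine List.pairwise_of_forall_mem_list ?_
          intro x hx y hy
          simp [tagW] at hx hy
          obtain ⟨_, _, rfl⟩ := hx
          obtain ⟨_, _, rfl⟩ := hy
          simp
        · intro x hx
          simp [tagW] at hx
          obtain ⟨_, _, rfl⟩ := hx
          simp
      · simp [strip, cut, tagW]
      · simp [twd, rwd, tagW, List.filter_map, Function.comp_def]
    cases w with
    | nil =>
      simp only [extT, List.mem_singleton]
      constructor
      · rintro rfl; simp [VT, strip, twd]
      · rintro ⟨h1, h2, h3⟩
        rcases key h1 h2 with h | ⟨u, hu, rfl⟩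
        · exact h
        · rw [(single u hu).2.2] at h3
          exact absurd h3 hu
    | cons a w =>
      simp only [extT, List.mem_singleton]
      constructor
      · rintro rfl; exact single _ (by simp)
      · rintro ⟨h1, h2, h3⟩
        rcases key h1 h2 with rfl | ⟨u, hu, rfl⟩
        · simp [twd] at h3
        · rw [(single u hu).2.2] at h3
          rw [h3]
  | cons r R ih =>
    rw [VT_cons] at hT
    obtain ⟨hr, hlt, hR⟩ := hT
    simp only [extT, List.mem_flatMap, List.mem_map, ih hR, mem_spl]
    constructor
    · rintro ⟨p, rfl, R', ⟨h1, h2, h3⟩, rfl⟩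
      refine ⟨?_, ?_, ?_⟩
      · rw [VT_cons]
        refine ⟨RowOK_append_tag hr _, ?_, h1⟩
        intro s hs
        have hsok := h1.1 s hs
        cases r with
        | nil => exact absurd rfl hr.1
        | cons x r =>
          intro x' hx' y hy
          simp at hx'
          subst hx'
          by_cases hc : cut (n + 1) s = []
          · have := cut_nil_head hc y (List.mem_of_mem_head? hy)
            have := (hr.2.2 x (by simp)).2
            omega
          · have hmem : cut (n + 1) s ∈ R := by
              rw [← h2, mem_strip]
              exact ⟨hc, s, hs, rfl⟩
            apply hlt _ hmem x (by simp) y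
            rw [cut_head hsok hc]
            exact hy
      · rw [strip, cut_append_tag hr, if_neg hr.1, h2]
      · rw [twd, rwd_append_tag hr, h3]
    · rintro ⟨h1, h2, rfl⟩
      cases T' with
      | nil => simp [strip] at h2
      | cons r0 R0 =>
        rw [strip] at h2
        split_ifs at h2 with hc
        · have := VT_all_top h1 hc
          subst this
          simp [strip] at h2
        · rw [VT_cons] at h1
          simp only [List.cons.injEq] at h2
          refine ⟨(twd R0 (n + 1), rwd (n + 1) r0), rfl, R0, ⟨h1.2.2, h2.2, rfl⟩, ?_⟩
          simp only
          rw [← h2.1, ← row_decomp h1.1]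

lemma nodup_extT (n : ℕ) (T : Tab A) (w : List A) : (extT n T w).Nodup := by
  induction T generalizing w with
  | nil => cases w <;> simp [extT]
  | cons r R ih =>
    rw [extT, List.nodup_flatMap]
    refine ⟨fun p _ => (ih _).map (fun a b h => by simpa using h), ?_⟩
    refine List.Pairwise.imp_of_mem ?_ (spl_nodup w)
    intro p q hp hq hne T' h3 h4
    simp only [List.mem_map] at h3 h4
    obtain ⟨a, _, rfl⟩ := h3
    obtain ⟨b, _, h⟩ := h4
    simp only [List.cons.injEq, List.append_cancel_left_eq] at h
    have h5 := congrArg (List.map Prod.fst) h.1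
    rw [tagW_fst, tagW_fst] at h5
    rw [mem_spl] at hp hq
    apply hne
    rw [← hq, h5] at hp
    exact Prod.ext (List.append_cancel_right hp) h5.symm

lemma mem_tabsR (C : Sentence A) (T : Tab A) :
    T ∈ tabsR C ↔ VT C.length T ∧ ∀ v, 1 ≤ v → twd T v = C.reverse.getD (v - 1) [] := by
  induction C generalizing T with
  | nil =>
    simp only [tabsR, List.mem_singleton]
    constructor
    · rintro rfl; simp [VT, twd]
    · rintro ⟨h, -⟩
      cases T with
      | nil => rfl
      | cons r R =>
        rw [VT_cons] at h
        cases r with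
        | nil => exact absurd rfl h.1.1
        | cons x r =>
          have := h.1.2.2 x (by simp)
          simp at this
          omega
  | cons w C ih =>
    simp only [tabsR, List.mem_flatMap]
    have hget : ∀ v, 1 ≤ v → v ≠ C.length + 1 →
        (w :: C).reverse.getD (v - 1) [] = C.reverse.getD (v - 1) [] := by
      intro v h1 h2
      simp only [List.reverse_cons, List.getD_eq_getElem?_getD]
      rcases lt_or_ge (v - 1) C.length with h | h
      · rw [List.getElem?_append_left (by simpa using h)]
      · rw [List.getElem?_eq_none (by simp; omega), List.getElem?_eq_none (by simp; omega)]
    have hget2 : (w :: C).reverse.getD (C.length + 1 - 1) [] = w := by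
      simp [List.getD_eq_getElem?_getD]
    constructor
    · rintro ⟨T0, h0, h1⟩
      rw [ih] at h0
      rw [mem_extT h0.1] at h1
      obtain ⟨h2, rfl, h4⟩ := h1
      refine ⟨by simpa using h2, ?_⟩
      intro v hv
      by_cases hvm : v = C.length + 1
      · subst hvm; rw [hget2, h4]
      · rw [hget v hv hvm, ← h0.2 v hv, twd_strip hvm]
    · rintro ⟨h1, h2⟩
      have h1' : VT (C.length + 1) T := by simpa using h1
      have hs := VT_strip h1'
      refine ⟨strip (C.length + 1) T, (ih _).2 ⟨hs, ?_⟩, (mem_extT hs _ _).2 ⟨h1', rfl, ?_⟩⟩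
      · intro v hv
        by_cases hvm : v = C.length + 1
        · subst hvm
          rw [twd_eq_nil]
          · simp
          · intro r hr x hx
            have := ((hs.1 r hr).2.2 x hx).2
            omega
        · rw [twd_strip hvm, h2 v hv, hget v hv hvm]
      · rw [h2 _ (by omega), hget2]

lemma nodup_tabsR (C : Sentence A) : (tabsR C).Nodup := by
  induction C with
  | nil => simp [tabsR]
  | cons w C ih =>
    rw [tabsR, List.nodup_flatMap]
    refine ⟨fun T _ => nodup_extT _ _ _, ?_⟩
    refine List.Pairwise.imp_of_mem ?_ ih
    intro T1 T2 h1 h2 hne T h3 h4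
    rw [mem_tabsR] at h1 h2
    rw [mem_extT h1.1] at h3
    rw [mem_extT h2.1] at h4
    exact hne (h3.2.1.symm.trans h4.2.1)

lemma size_extT (n : ℕ) (T : Tab A) (w : List A) :
    ∀ T' ∈ extT n T w, size (shp T') = size (shp T) + w.length := by
  induction T generalizing w with
  | nil => cases w <;> simp [extT, shp, size, tagW]
  | cons r R ih =>
    intro T' h
    simp only [extT, List.mem_flatMap, List.mem_map, mem_spl] at h
    obtain ⟨p, rfl, R', hR', rfl⟩ := h
    have := ih _ _ hR'
    simp [shp, size, tagW] at this ⊢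
    omega

lemma size_tabsR (C : Sentence A) : ∀ T ∈ tabsR C, size (shp T) = size C.reverse := by
  induction C with
  | nil => simp [tabsR, shp, size]
  | cons w C ih =>
    intro T h
    simp only [tabsR, List.mem_flatMap] at h
    obtain ⟨T0, h0, h1⟩ := h
    rw [size_extT _ _ _ _ h1, ih _ h0]
    simp [size]

lemma zip_fst_snd {B D : Type*} (r : List (B × D)) : (r.map Prod.fst).zip (r.map Prod.snd) = r := by
  induction r with
  | nil => rfl
  | cons x r ih => simp [ih]

lemma typeWord_tab (T : Tab A) (v : ℕ) : typeWord (shp T) (ent T) v = twd T v := by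
  induction T with
  | nil => rfl
  | cons r R ih =>
    rw [twd, ← ih]
    simp [typeWord, shp, ent, rowWith, zip_fst_snd, rwd]

lemma cit_tab (C : Sentence A) (T : Tab A) (hs : IsSentence (shp T)) :
    (IsCIT (shp T) (ent T) ∧ HasType (shp T) (ent T) C.reverse) ↔ T ∈ tabsR C := by
  rw [mem_tabsR]
  simp only [HasType, typeWord_tab]
  have hne : ∀ r ∈ T, r ≠ [] := by
    intro r hr h0
    subst h0
    exact hs [] (List.mem_map.2 ⟨[], hr, rfl⟩) rfl
  apply and_congr_left
  intro hty
  have hchain : ((ent T).filterMap List.head?).Chain' (· < ·) ↔ T.Pairwise hLT := by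
    rw [List.Chain', List.isChain_iff_pairwise, List.pairwise_filterMap, ent, List.pairwise_map]
    simp only [hLT, List.head?_map, Option.map_eq_some_iff, Option.mem_def]
    constructor
    · intro h
      refine h.imp ?_
      intro a b hab x hx y hy
      exact hab _ ⟨x, hx, rfl⟩ _ ⟨y, hy, rfl⟩
    · intro h
      refine h.imp ?_
      rintro a b hab _ ⟨x, hx, rfl⟩ _ ⟨y, hy, rfl⟩
      exact hab x hx y hy
  unfold IsCIT VT
  rw [hchain]
  constructor
  · rintro ⟨-, h2, h3, h4⟩
    refine ⟨?_, h3⟩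
    intro r hr
    refine ⟨hne r hr, ?_, ?_⟩
    · have := h2 (r.map Prod.snd) (by simpa [ent] using ⟨r, hr, rfl⟩)
      rw [List.Chain', List.isChain_iff_pairwise, List.pairwise_map] at this
      exact this
    · intro x hx
      have h1 : 1 ≤ x.2 := by
        apply h4
        rw [List.mem_flatten]
        exact ⟨r.map Prod.snd, by simpa [ent] using ⟨r, hr, rfl⟩, List.mem_map_of_mem hx⟩
      refine ⟨h1, ?_⟩
      by_contra hgt
      have e := hty x.2 h1
      rw [List.getD_eq_getElem?_getD, List.getElem?_eq_none (by simp; omega)] at e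
      exact twd_ne_nil hr hx rfl e
  · rintro ⟨h1, h3⟩
    refine ⟨by simp [ent, shp], ?_, h3, ?_⟩
    · intro row hrow
      simp only [ent, List.mem_map] at hrow
      obtain ⟨r, hr, rfl⟩ := hrow
      rw [List.Chain', List.isChain_iff_pairwise, List.pairwise_map]
      exact (h1 r hr).2.1
    · intro x hx
      rw [List.mem_flatten] at hx
      obtain ⟨row, hrow, hx⟩ := hx
      simp only [ent, List.mem_map] at hrow
      obtain ⟨r, hr, rfl⟩ := hrow
      simp only [List.mem_map] at hx
      obtain ⟨y, hy, rfl⟩ := hx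
      exact ((h1 r hr).2.2 y hy).1

lemma exists_tab (J : Sentence A) (f : Filling) (h : f.map List.length = J.map List.length) :
    ∃ T : Tab A, shp T = J ∧ ent T = f := by
  induction J generalizing f with
  | nil =>
    simp at h
    exact ⟨[], rfl, h.symm ▸ rfl⟩
  | cons w J ih =>
    cases f with
    | nil => simp at h
    | cons row f =>
      simp only [List.map_cons, List.cons.injEq] at h
      obtain ⟨T, h1, h2⟩ := ih f h.2
      refine ⟨w.zip row :: T, ?_, ?_⟩
      · simp only [shp, List.map_cons] at h1 ⊢
        rw [h1, List.map_fst_zip (by omega)]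
      · simp only [ent, List.map_cons] at h2 ⊢
        rw [h2, List.map_snd_zip (by omega)]

lemma tab_inj {T T' : Tab A} (h1 : shp T = shp T') (h2 : ent T = ent T') : T = T' := by
  induction T generalizing T' with
  | nil => cases T' with
    | nil => rfl
    | cons => simp [shp] at h1
  | cons r R ih => cases T' with
    | nil => simp [shp] at h1
    | cons r' R' =>
      simp only [shp, ent, List.map_cons, List.cons.injEq] at h1 h2
      rw [ih h1.2 h2.2, ← zip_fst_snd r, ← zip_fst_snd r', h1.1, h2.1]

lemma KJB_eq (C J : Sentence A) (hJ : IsSentence J) :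
    KJB J C.reverse = ((tabsR C).toFinset.filter fun T => shp T = J).card := by
  unfold KJB
  rw [← Set.ncard_coe_finset]
  symm
  apply Set.ncard_congr (fun T _ => ent T)
  · intro T hT
    simp only [Finset.coe_filter, List.mem_toFinset, Set.mem_setOf_eq] at hT
    obtain ⟨hT, rfl⟩ := hT
    exact (cit_tab C T hJ).2 hT
  · intro T T' hT hT' h
    simp only [Finset.coe_filter, List.mem_toFinset, Set.mem_setOf_eq] at hT hT'
    exact tab_inj (hT.2.trans hT'.2.symm) h
  · intro f hf
    obtain ⟨T, rfl, rfl⟩ := exists_tab J f hf.1.1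
    refine ⟨T, ?_, rfl⟩
    simp only [Finset.coe_filter, List.mem_toFinset, Set.mem_setOf_eq]
    exact ⟨(cit_tab C T hJ).1 hf, trivial⟩

lemma shp_sentence {C : Sentence A} {T : Tab A} (h : T ∈ tabsR C) : IsSentence (shp T) := by
  rw [mem_tabsR] at h
  intro w hw
  simp only [shp, List.mem_map] at hw
  obtain ⟨r, hr, rfl⟩ := hw
  simpa using (h.1.1 r hr).1

lemma main_rev (C : Sentence A) (hC : IsSentence C) :
    Hd C.reverse =
      ∑ᶠ J ∈ {J : Sentence A | IsSentence J ∧ size J = size C.reverse},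
        (KJB J C.reverse : ℚ) • ImmS J := by
  rw [Hd_tabs C hC, ← List.sum_toFinset _ (nodup_tabsR C), finsum_mem_ite]
  have hsub : (Function.support fun J : Sentence A =>
      if IsSentence J ∧ size J = size C.reverse then (KJB J C.reverse : ℚ) • ImmS J else 0) ⊆
      (((tabsR C).toFinset.image shp : Finset (Sentence A)) : Set (Sentence A)) := by
    intro J hJ
    rw [Function.mem_support] at hJ
    split_ifs at hJ with h
    · by_contra hn
      apply hJ
      rw [KJB_eq C J h.1, Finset.card_eq_zero.2]
      · simp
      · rw [Finset.filter_eq_empty_iff]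
        intro T hT he
        apply hn
        simp only [Finset.coe_image, Set.mem_image]
        exact ⟨T, hT, he⟩
    · exact absurd rfl hJ
  have hfs := finsum_eq_sum_of_support_subset _ hsub
  refine Eq.trans ?_ (Eq.trans hfs.symm (finsum_congr fun J => by congr 1))
  rw [Finset.sum_comp ImmS shp]
  apply Finset.sum_congr rfl
  intro J hJ
  rw [Finset.mem_image] at hJ
  obtain ⟨T, hT, rfl⟩ := hJ
  rw [List.mem_toFinset] at hT
  rw [if_pos ⟨shp_sentence hT, size_tabsR C T hT⟩, KJB_eq C _ (shp_sentence hT), Nat.cast_smul_eq_nsmul]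

end part3

/-- The colored complete homogeneous function expands positively into
the colored immaculate basis: `H_C = Σ_J K_{J,C} 𝔖_J`, summed over all sentences `J` with
`|J| = |C|`. -/
theorem statement13 {A : Type*} (C : Sentence A) (hC : IsSentence C) :
    Hd C =
      ∑ᶠ J ∈ {J : Sentence A | IsSentence J ∧ size J = size C}, (KJB J C : ℚ) • ImmS J := by
  have h := main_rev C.reverse (fun w hw => hC w (by simpa using hw))
  simpa only [List.reverse_reverse] using h

end ColoredImm
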